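/- arXiv:2311.17579 — 2 statements merged into one kernel-verified Lean document; each statement's English description precedes it below -/
import Mathlib

section
/- Let N ≥ 1, 0 < q < 1 and 0 < γ < min{2, N}. Let u₀ : ℝ^N → ℝ be a non-negative continuous function vanishing at infinity. Then there exists a non-negative function u : ℝ^N × [0,∞) → ℝ such that for every t ≥ 0 the map x ↦ u(x,t) is continuous and vanishes at infinity, the map t ↦ u(·,t) is continuous from [0,∞) into the bounded continuous functions with the sup norm, and for every t ≥ 0 and x ∈ ℝ^N one has u(x,t) = ∫_{ℝ^N} G_t(x−y) u₀(y) dy + ∫₀ᵗ ∫_{ℝ^N} G_{t−σ}(x−y) |y|^{−γ} u(y,σ)^q dy dσ. -/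
open MeasureTheory Filter Real

/-- The heat kernel `G_t(x) = (4πt)^{-N/2} exp(-|x|²/(4t))` on `ℝ^N`. -/
noncomputable def heatKernel (N : ℕ) (t : ℝ) (x : EuclideanSpace ℝ (Fin N)) : ℝ :=
  (4 * π * t) ^ (-(N : ℝ) / 2) * Real.exp (-‖x‖ ^ 2 / (4 * t))

namespace HeatEquation

open scoped Topology ENNReal

section VanishingAtInfinity

variable {E : Type*} [NormedAddCommGroup E]

instance isCountablyGenerated_cocompact [ProperSpace E] : (cocompact E).IsCountablyGenerated := by
  rw [← Metric.cobounded_eq_cocompact, ← comap_norm_atTop]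
  infer_instance

/-- A continuous function vanishing at infinity is bounded. -/
lemma exists_norm_le_of_tendsto_cocompact {g : E → ℝ} (hg : Continuous g)
    (hg0 : Tendsto g (cocompact E) (𝓝 0)) : ∃ C, 0 ≤ C ∧ ∀ x, ‖g x‖ ≤ C := by
  let f : ZeroAtInftyContinuousMap E ℝ := ⟨⟨g, hg⟩, hg0⟩
  exact ⟨‖f.toBCF‖, norm_nonneg _, fun x => f.toBCF.norm_coe_le_norm x⟩

variable [MeasurableSpace E] [BorelSpace E] {μ : Measure E}

/-- Averages of shifts of a function vanishing at infinity converge along any filter along which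
the shifted integrands converge pointwise. -/
lemma tendsto_integral_mul_comp {ι : Type*} {l : Filter ι} [l.IsCountablyGenerated]
    {f g : E → ℝ} (hf : Integrable f μ) (hg : Continuous g)
    (hg0 : Tendsto g (cocompact E) (𝓝 0)) {φ : ι → E → E} (hφ : ∀ i, Continuous (φ i))
    {G : E → ℝ} (hlim : ∀ z, Tendsto (fun i => g (φ i z)) l (𝓝 (G z))) :
    Tendsto (fun i => ∫ z, f z * g (φ i z) ∂μ) l (𝓝 (∫ z, f z * G z ∂μ)) := by
  obtain ⟨C, hC, hgC⟩ := exists_norm_le_of_tendsto_cocompact hg hg0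
  refine tendsto_integral_filter_of_dominated_convergence (fun z => ‖f z‖ * C)
    (Eventually.of_forall fun i => ?_) (Eventually.of_forall fun i => ?_)
    (hf.norm.mul_const C) (Eventually.of_forall fun z => (hlim z).const_mul (f z))
  · exact hf.aestronglyMeasurable.mul (hg.comp (hφ i)).aestronglyMeasurable
  · refine Eventually.of_forall fun z => ?_
    rw [norm_mul]
    gcongr
    exact hgC _

lemma continuous_integral_mul_sub {f g : E → ℝ} (hf : Integrable f μ) (hg : Continuous g)
    (hg0 : Tendsto g (cocompact E) (𝓝 0)) :
    Continuous fun a => ∫ z, f z * g (a - z) ∂μ := by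
  refine continuous_iff_continuousAt.2 fun a => ?_
  refine tendsto_integral_mul_comp hf hg hg0 (fun a => by fun_prop) fun z => ?_
  exact Continuous.tendsto (by fun_prop) _

lemma tendsto_integral_mul_sub [ProperSpace E] {f g : E → ℝ} (hf : Integrable f μ) (hg : Continuous g)
    (hg0 : Tendsto g (cocompact E) (𝓝 0)) :
    Tendsto (fun a => ∫ z, f z * g (a - z) ∂μ) (cocompact E) (𝓝 0) := by
  have := tendsto_integral_mul_comp (l := cocompact E) (φ := fun a z => a - z) (G := fun _ => 0)
    hf hg hg0 (fun a => by fun_prop) fun z => ?_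
  · simpa using this
  · exact hg0.comp (Homeomorph.subRight z).isClosedEmbedding.tendsto_cocompact

end VanishingAtInfinity

section HeatKernel

variable {N : ℕ}

lemma heatKernel_nonneg {t : ℝ} (ht : 0 ≤ t) (x : EuclideanSpace ℝ (Fin N)) :
    0 ≤ heatKernel N t x := by
  unfold heatKernel
  positivity

lemma measurable_heatKernel :
    Measurable fun p : ℝ × EuclideanSpace ℝ (Fin N) => heatKernel N p.1 p.2 := by
  unfold heatKernel
  fun_prop

lemma continuousAt_heatKernel {p : ℝ × EuclideanSpace ℝ (Fin N)} (hp : 0 < p.1) :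
    ContinuousAt (fun p : ℝ × EuclideanSpace ℝ (Fin N) => heatKernel N p.1 p.2) p := by
  unfold heatKernel
  refine ContinuousAt.mul (ContinuousAt.rpow_const (by fun_prop) (Or.inl ?_)) ?_
  · positivity
  · refine ContinuousAt.rexp (ContinuousAt.div (by fun_prop) (by fun_prop) ?_)
    positivity

lemma continuous_heatKernel_one : Continuous (heatKernel N 1) := by
  unfold heatKernel
  fun_prop

lemma tendsto_heatKernel_one_cocompact :
    Tendsto (heatKernel N 1) (cocompact (EuclideanSpace ℝ (Fin N))) (𝓝 0) := by
  have h : Tendsto (fun r : ℝ => (4 * π * 1) ^ (-(N : ℝ) / 2) * rexp (-(r ^ 2 / 4))) atTop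
      (𝓝 ((4 * π * 1) ^ (-(N : ℝ) / 2) * 0)) := by
    refine Tendsto.const_mul _ (tendsto_exp_neg_atTop_nhds_zero.comp ?_)
    exact (tendsto_pow_atTop two_ne_zero).atTop_div_const (by norm_num)
  rw [mul_zero] at h
  refine (h.comp (tendsto_norm_cocompact_atTop (E := EuclideanSpace ℝ (Fin N)))).congr fun x => ?_
  simp [heatKernel, neg_div]

lemma integral_heatKernel_one : ∫ x, heatKernel N 1 x = 1 := by
  have h := GaussianFourier.integral_rexp_neg_mul_sq_norm (V := EuclideanSpace ℝ (Fin N))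
    (b := 1 / 4) (by norm_num)
  have h2 : ∀ x : EuclideanSpace ℝ (Fin N), heatKernel N 1 x
      = (4 * π) ^ (-(N : ℝ) / 2) * rexp (-(1 / 4) * ‖x‖ ^ 2) := fun x => by
    unfold heatKernel
    congr 2
    · ring
    · ring
  simp_rw [h2]
  rw [integral_const_mul, h, finrank_euclideanSpace_fin,
    show π / (1 / 4) = 4 * π by ring, ← Real.rpow_add (by positivity)]
  rw [neg_div, neg_add_cancel, Real.rpow_zero]

lemma integrable_heatKernel_one : Integrable (heatKernel N 1) := by
  by_contra h
  exact one_ne_zero (integral_heatKernel_one.symm.trans (integral_undef h))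

lemma heatKernel_smul_sqrt {s : ℝ} (hs : 0 < s) (z : EuclideanSpace ℝ (Fin N)) :
    heatKernel N s (√s • z) = (√s ^ N)⁻¹ * heatKernel N 1 z := by
  unfold heatKernel
  have h1 : (√s ^ N)⁻¹ = s ^ (-(N : ℝ) / 2) := by
    rw [neg_div, Real.rpow_neg hs.le, Real.sqrt_eq_rpow, ← Real.rpow_natCast, ← Real.rpow_mul hs.le]
    congr 2
    ring
  rw [h1, Real.mul_rpow (by positivity) hs.le, norm_smul, mul_one, mul_pow, Real.norm_eq_abs,
    sq_abs, Real.sq_sqrt hs.le]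
  have h2 : -(s * ‖z‖ ^ 2) / (4 * s) = -‖z‖ ^ 2 / (4 * 1) := by
    field_simp
  rw [h2]
  ring

/-- Parabolic rescaling of a Gaussian average. -/
lemma integral_heatKernel_mul {s : ℝ} (hs : 0 < s) (g : EuclideanSpace ℝ (Fin N) → ℝ)
    (x : EuclideanSpace ℝ (Fin N)) :
    ∫ y, heatKernel N s (x - y) * g y = ∫ z, heatKernel N 1 z * g (x - √s • z) := by
  have hs' : 0 < √s := Real.sqrt_pos.2 hs
  rw [← integral_sub_left_eq_self _ volume x]
  simp only [sub_sub_cancel]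
  have h := Measure.integral_comp_smul volume
    (fun w : EuclideanSpace ℝ (Fin N) => heatKernel N s w * g (x - w)) (√s)
  rw [finrank_euclideanSpace_fin, abs_of_pos (by positivity), smul_eq_mul] at h
  simp_rw [heatKernel_smul_sqrt hs, mul_assoc] at h
  rw [integral_const_mul] at h
  exact (mul_left_cancel₀ (by positivity) h).symm

lemma integrable_heatKernel_mul {s : ℝ} (hs : 0 < s) {g : EuclideanSpace ℝ (Fin N) → ℝ}
    {x : EuclideanSpace ℝ (Fin N)}
    (h : Integrable fun z => heatKernel N 1 z * g (x - √s • z)) :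
    Integrable fun y => heatKernel N s (x - y) * g y := by
  have hs' : 0 < √s := Real.sqrt_pos.2 hs
  rw [← integrable_comp_sub_left _ x]
  simp only [sub_sub_cancel]
  rw [← integrable_comp_smul_iff volume _ hs'.ne']
  simp_rw [heatKernel_smul_sqrt hs, mul_assoc]
  exact h.const_mul _

end HeatKernel

section HeatSemigroup

variable {N : ℕ} {g : EuclideanSpace ℝ (Fin N) → ℝ}

/-- The heat semigroup in rescaled form; it is `g` itself for `t ≤ 0`. -/
noncomputable def heatFlow (N : ℕ) (g : EuclideanSpace ℝ (Fin N) → ℝ)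
    (p : ℝ × EuclideanSpace ℝ (Fin N)) : ℝ :=
  ∫ z, heatKernel N 1 z * g (p.2 - √p.1 • z)

lemma heatFlow_zero (x : EuclideanSpace ℝ (Fin N)) : heatFlow N g (0, x) = g x := by
  simp [heatFlow, integral_mul_const, integral_heatKernel_one]

lemma heatFlow_nonneg (hg : ∀ x, 0 ≤ g x) (p : ℝ × EuclideanSpace ℝ (Fin N)) :
    0 ≤ heatFlow N g p :=
  integral_nonneg fun _ => mul_nonneg (heatKernel_nonneg zero_le_one _) (hg _)

lemma heatFlow_le {C : ℝ} (hC : ∀ x, g x ≤ C) (hC0 : 0 ≤ C)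
    (p : ℝ × EuclideanSpace ℝ (Fin N)) : heatFlow N g p ≤ C := by
  by_cases h : Integrable fun z => heatKernel N 1 z * g (p.2 - √p.1 • z)
  · calc heatFlow N g p ≤ ∫ z, heatKernel N 1 z * C :=
        integral_mono h (integrable_heatKernel_one.mul_const C) fun z =>
          mul_le_mul_of_nonneg_left (hC _) (heatKernel_nonneg zero_le_one _)
      _ = C := by rw [integral_mul_const, integral_heatKernel_one, one_mul]
  · exact (integral_undef h).trans_le hC0

lemma continuous_heatFlow (hg : Continuous g)
    (hg0 : Tendsto g (cocompact (EuclideanSpace ℝ (Fin N))) (𝓝 0)) :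
    Continuous (heatFlow N g) := by
  refine continuous_iff_continuousAt.2 fun p => ?_
  refine tendsto_integral_mul_comp
    (φ := fun (p : ℝ × EuclideanSpace ℝ (Fin N)) z => p.2 - √p.1 • z)
    integrable_heatKernel_one hg hg0 (fun p => by fun_prop) fun z => ?_
  exact Continuous.tendsto (by fun_prop) _

lemma tendsto_heatFlow (hg : Continuous g)
    (hg0 : Tendsto g (cocompact (EuclideanSpace ℝ (Fin N))) (𝓝 0)) (T : ℝ) :
    Tendsto (heatFlow N g) (𝓟 (Set.Iic T) ×ˢ cocompact (EuclideanSpace ℝ (Fin N))) (𝓝 0) := by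
  have := tendsto_integral_mul_comp (μ := volume)
    (l := 𝓟 (Set.Iic T) ×ˢ cocompact (EuclideanSpace ℝ (Fin N)))
    (φ := fun (p : ℝ × EuclideanSpace ℝ (Fin N)) z => p.2 - √p.1 • z) (G := fun _ => 0)
    integrable_heatKernel_one hg hg0 (fun p => by fun_prop) fun z => ?_
  · simp only [mul_zero, integral_zero] at this
    exact this
  · refine hg0.comp ?_
    rw [← Metric.cobounded_eq_cocompact, ← tendsto_norm_atTop_iff_cobounded]
    have h1 : Tendsto (fun p : ℝ × EuclideanSpace ℝ (Fin N) => ‖p.2‖ + -(√T * ‖z‖))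
        (𝓟 (Set.Iic T) ×ˢ Bornology.cobounded _) atTop :=
      tendsto_atTop_add_const_right _ _ (tendsto_norm_cobounded_atTop.comp tendsto_snd)
    refine tendsto_atTop_mono' _ ?_ h1
    have h2 : ∀ᶠ p : ℝ × EuclideanSpace ℝ (Fin N) in
        𝓟 (Set.Iic T) ×ˢ Bornology.cobounded _, p.1 ≤ T :=
      tendsto_fst.eventually (eventually_principal.2 fun _ h => h)
    filter_upwards [h2] with p hp
    have h3 : ‖√p.1 • z‖ ≤ √T * ‖z‖ := by
      rw [norm_smul, Real.norm_of_nonneg (Real.sqrt_nonneg _)]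
      gcongr
    have := norm_sub_norm_le p.2 (√p.1 • z)
    linarith

end HeatSemigroup

section SingularPotential

variable {N : ℕ} {γ : ℝ}

/-- The part of `|y|^{-γ}` that is truncated near the origin. -/
noncomputable def truncatedPower (N : ℕ) (γ : ℝ) (y : EuclideanSpace ℝ (Fin N)) : ℝ :=
  max ‖y‖ 1 ^ (-γ)

lemma continuous_truncatedPower : Continuous (truncatedPower N γ) := by
  unfold truncatedPower
  exact Continuous.rpow_const (by fun_prop) fun y => Or.inl (by positivity)

lemma tendsto_truncatedPower (hγ : 0 < γ) :
    Tendsto (truncatedPower N γ) (cocompact (EuclideanSpace ℝ (Fin N))) (𝓝 0) := by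
  refine (tendsto_rpow_neg_atTop hγ).comp ?_
  exact tendsto_atTop_mono (fun y => le_max_left _ _) tendsto_norm_cocompact_atTop

lemma integrable_norm_rpow_sub_truncatedPower (hN : 1 ≤ N) (hγN : γ < N) :
    Integrable fun y : EuclideanSpace ℝ (Fin N) => ‖y‖ ^ (-γ) - truncatedPower N γ y := by
  have hsupp : Function.support
      (fun y : EuclideanSpace ℝ (Fin N) => ‖y‖ ^ (-γ) - truncatedPower N γ y)
      ⊆ Metric.ball 0 1 := by
    intro y hy
    by_contra h
    rw [mem_ball_zero_iff, not_lt] at h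
    exact hy (by simp [truncatedPower, max_eq_left h])
  rw [← integrableOn_iff_integrable_of_support_subset hsupp]
  refine Integrable.sub ?_ ?_
  · have : Nontrivial (EuclideanSpace ℝ (Fin N)) :=
      Module.nontrivial_of_finrank_pos (R := ℝ) (by rw [finrank_euclideanSpace_fin]; omega)
    refine (integrableOn_fun_norm_addHaar volume (f := fun r => r ^ (-γ)) (r := 1)).2 ?_
    rw [finrank_euclideanSpace_fin]
    have h : IntegrableOn (fun r : ℝ => r ^ ((N : ℝ) - 1 - γ)) (Set.Ioo 0 1) :=
      (intervalIntegral.integrableOn_Ioo_rpow_iff one_pos).2 (by linarith)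
    refine h.congr_fun (fun r hr => ?_) measurableSet_Ioo
    simp only [smul_eq_mul]
    rw [← Real.rpow_natCast, ← Real.rpow_add hr.1, Nat.cast_sub hN]
    congr 1
    push_cast
    ring
  · exact (continuous_truncatedPower.locallyIntegrable.integrableOn_isCompact
      (isCompact_closedBall 0 1)).mono_set Metric.ball_subset_closedBall

/-- The Gaussian average of `|y|^{-γ}` around `a`. -/
noncomputable def gaussPotential (N : ℕ) (γ : ℝ) (a : EuclideanSpace ℝ (Fin N)) : ℝ :=
  ∫ z, heatKernel N 1 z * ‖a - z‖ ^ (-γ)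

lemma integrable_mul_comp_sub {f g : EuclideanSpace ℝ (Fin N) → ℝ} (hf : Integrable f)
    (hg : Continuous g) (hg0 : Tendsto g (cocompact _) (𝓝 0)) (a : EuclideanSpace ℝ (Fin N)) :
    Integrable fun z => f z * g (a - z) := by
  obtain ⟨C, -, hC⟩ := exists_norm_le_of_tendsto_cocompact hg hg0
  refine hf.mul_bdd (c := C) ?_ (Eventually.of_forall fun z => hC _)
  exact (hg.comp (by fun_prop)).aestronglyMeasurable

lemma integrable_gaussPotential (hN : 1 ≤ N) (hγ : 0 < γ) (hγN : γ < N)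
    (a : EuclideanSpace ℝ (Fin N)) :
    Integrable fun z => heatKernel N 1 z * ‖a - z‖ ^ (-γ) := by
  have h1 := integrable_mul_comp_sub (integrable_heatKernel_one (N := N))
    continuous_truncatedPower (tendsto_truncatedPower hγ) a
  have h2 := integrable_mul_comp_sub (integrable_norm_rpow_sub_truncatedPower hN hγN)
    continuous_heatKernel_one tendsto_heatKernel_one_cocompact a
  rw [← integrable_comp_sub_left _ a] at h2
  refine (h1.add h2).congr (Eventually.of_forall fun z => ?_)
  simp only [Pi.add_apply, sub_sub_cancel]
  ring

lemma gaussPotential_eq (hN : 1 ≤ N) (hγ : 0 < γ) (hγN : γ < N) :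
    gaussPotential N γ = fun a => (∫ z, heatKernel N 1 z * truncatedPower N γ (a - z)) +
      ∫ z, (‖z‖ ^ (-γ) - truncatedPower N γ z) * heatKernel N 1 (a - z) := by
  funext a
  have h1 := integrable_mul_comp_sub (integrable_heatKernel_one (N := N))
    continuous_truncatedPower (tendsto_truncatedPower hγ) a
  have h2 := integrable_mul_comp_sub (integrable_norm_rpow_sub_truncatedPower hN hγN)
    continuous_heatKernel_one tendsto_heatKernel_one_cocompact a
  rw [← integrable_comp_sub_left _ a] at h2
  rw [← integral_sub_left_eq_self (fun z => (‖z‖ ^ (-γ) - truncatedPower N γ z) * _) volume a,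
    ← integral_add h1 h2]
  refine integral_congr_ae (Eventually.of_forall fun z => ?_)
  simp only [sub_sub_cancel]
  ring

lemma gaussPotential_nonneg (a : EuclideanSpace ℝ (Fin N)) : 0 ≤ gaussPotential N γ a :=
  integral_nonneg fun _ => mul_nonneg (heatKernel_nonneg zero_le_one _) (by positivity)

lemma continuous_gaussPotential (hN : 1 ≤ N) (hγ : 0 < γ) (hγN : γ < N) :
    Continuous (gaussPotential N γ) := by
  rw [gaussPotential_eq hN hγ hγN]
  exact (continuous_integral_mul_sub integrable_heatKernel_one continuous_truncatedPower
    (tendsto_truncatedPower hγ)).add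
    (continuous_integral_mul_sub (integrable_norm_rpow_sub_truncatedPower hN hγN)
      continuous_heatKernel_one tendsto_heatKernel_one_cocompact)

lemma tendsto_gaussPotential (hN : 1 ≤ N) (hγ : 0 < γ) (hγN : γ < N) :
    Tendsto (gaussPotential N γ) (cocompact _) (𝓝 0) := by
  rw [gaussPotential_eq hN hγ hγN]
  simpa using (tendsto_integral_mul_sub integrable_heatKernel_one continuous_truncatedPower
    (tendsto_truncatedPower hγ)).add
    (tendsto_integral_mul_sub (integrable_norm_rpow_sub_truncatedPower hN hγN)
      continuous_heatKernel_one tendsto_heatKernel_one_cocompact)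

lemma heatKernel_mul_rescaled {s : ℝ} (hs : 0 < s) (x z : EuclideanSpace ℝ (Fin N)) :
    heatKernel N 1 z * ‖x - √s • z‖ ^ (-γ)
      = s ^ (-γ / 2) * (heatKernel N 1 z * ‖(√s)⁻¹ • x - z‖ ^ (-γ)) := by
  have hs' : 0 < √s := Real.sqrt_pos.2 hs
  have h : x - √s • z = √s • ((√s)⁻¹ • x - z) := by
    rw [smul_sub, smul_inv_smul₀ hs'.ne']
  rw [h, norm_smul, Real.norm_of_nonneg hs'.le, Real.mul_rpow hs'.le (norm_nonneg _),
    Real.sqrt_eq_rpow, ← Real.rpow_mul hs.le, show 1 / 2 * -γ = -γ / 2 by ring]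
  ring

lemma integral_heatKernel_mul_norm_rpow {s : ℝ} (hs : 0 < s) (x : EuclideanSpace ℝ (Fin N)) :
    ∫ y, heatKernel N s (x - y) * ‖y‖ ^ (-γ)
      = s ^ (-γ / 2) * gaussPotential N γ ((√s)⁻¹ • x) := by
  rw [integral_heatKernel_mul hs (fun y => ‖y‖ ^ (-γ)), gaussPotential, ← integral_const_mul]
  simp_rw [heatKernel_mul_rescaled hs]

lemma integrable_heatKernel_mul_norm_rpow (hN : 1 ≤ N) (hγ : 0 < γ) (hγN : γ < N)
    {s : ℝ} (hs : 0 < s) (x : EuclideanSpace ℝ (Fin N)) :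
    Integrable fun y => heatKernel N s (x - y) * ‖y‖ ^ (-γ) := by
  refine integrable_heatKernel_mul hs (g := fun y => ‖y‖ ^ (-γ)) ?_
  simp_rw [heatKernel_mul_rescaled hs]
  exact (integrable_gaussPotential hN hγ hγN _).const_mul _

/-- The Duhamel integral of the weight `|y|^{-γ}`. -/
noncomputable def weightDuhamel (N : ℕ) (γ : ℝ) (p : ℝ × EuclideanSpace ℝ (Fin N)) : ℝ :=
  ∫ s, (Set.Ioo 0 p.1).indicator
    (fun s => s ^ (-γ / 2) * gaussPotential N γ ((√s)⁻¹ • p.2)) s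

lemma integrable_indicator_rpow (hγ2 : γ < 2) (C T : ℝ) :
    Integrable ((Set.Ioo 0 T).indicator fun s : ℝ => s ^ (-γ / 2) * C) := by
  rw [integrable_indicator_iff measurableSet_Ioo]
  refine Integrable.mul_const ?_ C
  have h := intervalIntegral.intervalIntegrable_rpow' (a := 0) (b := max T 0)
    (r := -γ / 2) (by linarith)
  rw [intervalIntegrable_iff_integrableOn_Ioo_of_le (le_max_right _ _)] at h
  exact h.mono_set (Set.Ioo_subset_Ioo_right (le_max_left _ _))

/-- The integrand of `weightDuhamel` is dominated by a multiple of `s^{-γ/2}`. -/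
lemma norm_weightDuhamel_integrand_le {C T : ℝ} (hC0 : 0 ≤ C)
    (hC : ∀ a, ‖gaussPotential N γ a‖ ≤ C)
    {p : ℝ × EuclideanSpace ℝ (Fin N)} (hp : p.1 ≤ T) (s : ℝ) :
    ‖(Set.Ioo 0 p.1).indicator (fun s => s ^ (-γ / 2) * gaussPotential N γ ((√s)⁻¹ • p.2)) s‖
      ≤ (Set.Ioo 0 T).indicator (fun s : ℝ => s ^ (-γ / 2) * C) s := by
  by_cases hs : s ∈ Set.Ioo 0 p.1
  · have hs0 : 0 < s := hs.1
    rw [Set.indicator_of_mem hs, Set.indicator_of_mem (Set.Ioo_subset_Ioo_right hp hs), norm_mul,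
      Real.norm_of_nonneg (by positivity)]
    gcongr
    exact hC _
  · rw [Set.indicator_of_notMem hs, norm_zero]
    refine Set.indicator_nonneg (fun s hs => ?_) s
    have : 0 < s := hs.1
    positivity

lemma aestronglyMeasurable_weightDuhamel_integrand (hN : 1 ≤ N) (hγ : 0 < γ) (hγN : γ < N)
    (p : ℝ × EuclideanSpace ℝ (Fin N)) :
    AEStronglyMeasurable ((Set.Ioo 0 p.1).indicator
      (fun s => s ^ (-γ / 2) * gaussPotential N γ ((√s)⁻¹ • p.2))) := by
  refine Measurable.aestronglyMeasurable (Measurable.indicator ?_ measurableSet_Ioo)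
  have := (continuous_gaussPotential hN hγ hγN).measurable
  fun_prop

lemma exists_gaussPotential_le (hN : 1 ≤ N) (hγ : 0 < γ) (hγN : γ < N) :
    ∃ C, 0 ≤ C ∧ ∀ a, ‖gaussPotential N γ a‖ ≤ C :=
  exists_norm_le_of_tendsto_cocompact (continuous_gaussPotential hN hγ hγN)
    (tendsto_gaussPotential hN hγ hγN)

lemma continuous_weightDuhamel (hN : 1 ≤ N) (hγ : 0 < γ) (hγN : γ < N) (hγ2 : γ < 2) :
    Continuous (weightDuhamel N γ) := by
  obtain ⟨C, hC0, hC⟩ := exists_gaussPotential_le hN hγ hγN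
  refine continuous_iff_continuousAt.2 fun p₀ => ?_
  have hT : ∀ᶠ p in 𝓝 p₀, p.1 ≤ p₀.1 + 1 :=
    (continuousAt_fst.eventually (gt_mem_nhds (lt_add_one p₀.1))).mono fun p hp => hp.le
  refine tendsto_integral_filter_of_dominated_convergence
    ((Set.Ioo 0 (p₀.1 + 1)).indicator fun s : ℝ => s ^ (-γ / 2) * C)
    (Eventually.of_forall (aestronglyMeasurable_weightDuhamel_integrand hN hγ hγN))
    (hT.mono fun p hp => Eventually.of_forall (norm_weightDuhamel_integrand_le hC0 hC hp))
    (integrable_indicator_rpow hγ2 _ _) ?_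
  have hne : ∀ᵐ s : ℝ, s ≠ p₀.1 := by simp [ae_iff]
  filter_upwards [hne] with s hs
  rcases le_or_gt s 0 with h0 | h0
  · have : ∀ t : ℝ, s ∉ Set.Ioo 0 t := fun t h => (h.1.trans_le h0).false
    simp only [Set.indicator_of_notMem (this _), tendsto_const_nhds]
  rcases hs.lt_or_gt with h | h
  · have hev : ∀ᶠ p in 𝓝 p₀, s < p.1 := continuousAt_fst.eventually (lt_mem_nhds h)
    rw [Set.indicator_of_mem (show s ∈ Set.Ioo 0 p₀.1 from ⟨h0, h⟩)]
    have hcont : Continuous fun p : ℝ × EuclideanSpace ℝ (Fin N) =>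
        s ^ (-γ / 2) * gaussPotential N γ ((√s)⁻¹ • p.2) :=
      continuous_const.mul ((continuous_gaussPotential hN hγ hγN).comp (by fun_prop))
    refine (hcont.tendsto p₀).congr' ?_
    filter_upwards [hev] with p hp
    rw [Set.indicator_of_mem (show s ∈ Set.Ioo 0 p.1 from ⟨h0, hp⟩)]
  · have hev : ∀ᶠ p in 𝓝 p₀, p.1 < s := continuousAt_fst.eventually (gt_mem_nhds h)
    rw [Set.indicator_of_notMem fun hm => (hm.2.trans h).false]
    refine tendsto_const_nhds.congr' ?_
    filter_upwards [hev] with p hp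
    rw [Set.indicator_of_notMem fun hm => (hm.2.trans hp).false]

lemma tendsto_weightDuhamel (hN : 1 ≤ N) (hγ : 0 < γ) (hγN : γ < N) (hγ2 : γ < 2) (T : ℝ) :
    Tendsto (weightDuhamel N γ) (𝓟 (Set.Iic T) ×ˢ cocompact (EuclideanSpace ℝ (Fin N)))
      (𝓝 0) := by
  obtain ⟨C, hC0, hC⟩ := exists_gaussPotential_le hN hγ hγN
  have hT : ∀ᶠ p : ℝ × EuclideanSpace ℝ (Fin N) in
      𝓟 (Set.Iic T) ×ˢ cocompact (EuclideanSpace ℝ (Fin N)), p.1 ≤ T :=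
    tendsto_fst.eventually (eventually_principal.2 fun _ h => h)
  rw [← integral_zero ℝ ℝ (μ := volume)]
  refine tendsto_integral_filter_of_dominated_convergence
    ((Set.Ioo 0 T).indicator fun s : ℝ => s ^ (-γ / 2) * C)
    (Eventually.of_forall (aestronglyMeasurable_weightDuhamel_integrand hN hγ hγN))
    (hT.mono fun p hp => Eventually.of_forall (norm_weightDuhamel_integrand_le hC0 hC hp))
    (integrable_indicator_rpow hγ2 _ _) (Eventually.of_forall fun s => ?_)
  rcases le_or_gt s 0 with h0 | h0
  · have : ∀ t : ℝ, s ∉ Set.Ioo 0 t := fun t h => (h.1.trans_le h0).false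
    simp only [Set.indicator_of_notMem (this _), tendsto_const_nhds]
  have hs : (√s)⁻¹ ≠ 0 := inv_ne_zero (Real.sqrt_pos.2 h0).ne'
  have hlim : Tendsto (fun p : ℝ × EuclideanSpace ℝ (Fin N) =>
      s ^ (-γ / 2) * gaussPotential N γ ((√s)⁻¹ • p.2))
      (𝓟 (Set.Iic T) ×ˢ cocompact (EuclideanSpace ℝ (Fin N))) (𝓝 (s ^ (-γ / 2) * 0)) :=
    Tendsto.const_mul _ ((tendsto_gaussPotential hN hγ hγN).comp
      ((Homeomorph.smulOfNeZero _ hs).isClosedEmbedding.tendsto_cocompact.comp tendsto_snd))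
  rw [mul_zero] at hlim
  refine squeeze_zero_norm (fun p => ?_) (tendsto_zero_iff_norm_tendsto_zero.1 hlim)
  exact norm_indicator_le_norm_self _ _

lemma exists_weightDuhamel_le (hN : 1 ≤ N) (hγ : 0 < γ) (hγN : γ < N) (hγ2 : γ < 2) (T : ℝ) :
    ∃ K, 0 ≤ K ∧ ∀ p : ℝ × EuclideanSpace ℝ (Fin N), p.1 ≤ T → weightDuhamel N γ p ≤ K := by
  obtain ⟨C, hC0, hC⟩ := exists_gaussPotential_le hN hγ hγN
  refine ⟨∫ s, (Set.Ioo 0 T).indicator (fun s : ℝ => s ^ (-γ / 2) * C) s,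
    integral_nonneg fun s => Set.indicator_nonneg (fun s hs => ?_) s, fun p hp => ?_⟩
  · have : 0 < s := hs.1
    positivity
  · unfold weightDuhamel
    refine (Real.le_norm_self _).trans
      (norm_integral_le_of_norm_le (integrable_indicator_rpow hγ2 C T) ?_)
    exact Eventually.of_forall (norm_weightDuhamel_integrand_le hC0 hC hp)

end SingularPotential

section Duhamel

variable {N : ℕ} {γ : ℝ} {v : ℝ × EuclideanSpace ℝ (Fin N) → ℝ≥0∞}

/-- If two lower semicontinuous quantities have a convergent sum, then each of them converges. -/
lemma tendsto_of_le_liminf_of_add {ι : Type*} {l : Filter ι} {a b c : ι → ℝ≥0∞} {a₀ b₀ : ℝ≥0∞}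
    (ha : a₀ ≤ liminf a l) (hb : b₀ ≤ liminf b l) (hab : ∀ᶠ i in l, a i + b i = c i)
    (hc : Tendsto c l (𝓝 (a₀ + b₀))) (hb₀ : b₀ ≠ ∞) : Tendsto a l (𝓝 a₀) := by
  refine tendsto_order.2 ⟨fun d hd => eventually_lt_of_lt_liminf (hd.trans_le ha), fun d hd => ?_⟩
  obtain ⟨e, hae, hed⟩ := exists_between hd
  have hη : e - a₀ ≠ 0 := (tsub_pos_of_lt hae).ne'
  have hlt : a₀ + b₀ < d + (b₀ - (e - a₀)) := by
    calc a₀ + b₀ ≤ a₀ + ((e - a₀) + (b₀ - (e - a₀))) := by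
          gcongr
          exact le_add_tsub
      _ = e + (b₀ - (e - a₀)) := by rw [← add_assoc, add_tsub_cancel_of_le hae.le]
      _ < d + (b₀ - (e - a₀)) :=
          ENNReal.add_lt_add_right (ENNReal.sub_ne_top hb₀) hed
  have hb' : ∀ᶠ i in l, b₀ - (e - a₀) ≤ b i := by
    rcases eq_or_ne b₀ 0 with h0 | h0
    · simp [h0]
    · exact (eventually_lt_of_lt_liminf ((ENNReal.sub_lt_self hb₀ h0 hη).trans_le hb)).mono
        fun i hi => hi.le
  filter_upwards [hab, hb', hc.eventually (gt_mem_nhds hlt)] with i h1 h2 h3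
  rw [← h1] at h3
  exact lt_of_add_lt_add_right (h3.trans_le (by gcongr))

/-- The space-time kernel `G_{t-σ}(x-y)|y|^{-γ}`, cut off to `0 < σ < t`. -/
noncomputable def duhamelKernel (N : ℕ) (γ : ℝ) (p r : ℝ × EuclideanSpace ℝ (Fin N)) : ℝ≥0∞ :=
  {r : ℝ × EuclideanSpace ℝ (Fin N) | 0 < r.1 ∧ r.1 < p.1}.indicator
    (fun r => ENNReal.ofReal (heatKernel N (p.1 - r.1) (p.2 - r.2) * ‖r.2‖ ^ (-γ))) r

lemma measurable_duhamelKernel :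
    Measurable fun z : (ℝ × EuclideanSpace ℝ (Fin N)) × (ℝ × EuclideanSpace ℝ (Fin N)) =>
      duhamelKernel N γ z.1 z.2 := by
  have h1 : Measurable
      fun z : (ℝ × EuclideanSpace ℝ (Fin N)) × (ℝ × EuclideanSpace ℝ (Fin N)) =>
        ENNReal.ofReal (heatKernel N (z.1.1 - z.2.1) (z.1.2 - z.2.2) * ‖z.2.2‖ ^ (-γ)) := by
    refine Measurable.ennreal_ofReal (Measurable.mul ?_ (by fun_prop))
    exact measurable_heatKernel.comp (by fun_prop :
      Measurable fun z : (ℝ × EuclideanSpace ℝ (Fin N)) × (ℝ × EuclideanSpace ℝ (Fin N)) =>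
        (z.1.1 - z.2.1, z.1.2 - z.2.2))
  have h2 : MeasurableSet
      {z : (ℝ × EuclideanSpace ℝ (Fin N)) × (ℝ × EuclideanSpace ℝ (Fin N)) |
        0 < z.2.1 ∧ z.2.1 < z.1.1} := by
    rw [Set.ofPred_and]
    exact (measurableSet_lt (by fun_prop) (by fun_prop)).inter
      (measurableSet_lt (by fun_prop) (by fun_prop))
  exact h1.indicator h2

lemma measurable_duhamelKernel_right (p : ℝ × EuclideanSpace ℝ (Fin N)) :
    Measurable (duhamelKernel N γ p) :=
  measurable_duhamelKernel.comp measurable_prodMk_left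

lemma duhamelKernel_of_mem {p r : ℝ × EuclideanSpace ℝ (Fin N)} (h0 : 0 < r.1) (h1 : r.1 < p.1) :
    duhamelKernel N γ p r
      = ENNReal.ofReal (heatKernel N (p.1 - r.1) (p.2 - r.2) * ‖r.2‖ ^ (-γ)) :=
  Set.indicator_of_mem (show r ∈ {r : ℝ × EuclideanSpace ℝ (Fin N) | 0 < r.1 ∧ r.1 < p.1} from
    ⟨h0, h1⟩) _

lemma duhamelKernel_of_notMem {p r : ℝ × EuclideanSpace ℝ (Fin N)}
    (h : ¬(0 < r.1 ∧ r.1 < p.1)) : duhamelKernel N γ p r = 0 :=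
  Set.indicator_of_notMem
    (show r ∉ {r : ℝ × EuclideanSpace ℝ (Fin N) | 0 < r.1 ∧ r.1 < p.1} from h) _

/-- The Duhamel integral of the source `|y|^{-γ} v`. -/
noncomputable def duhamel (N : ℕ) (γ : ℝ) (v : ℝ × EuclideanSpace ℝ (Fin N) → ℝ≥0∞)
    (p : ℝ × EuclideanSpace ℝ (Fin N)) : ℝ≥0∞ :=
  ∫⁻ r, duhamelKernel N γ p r * v r

lemma measurable_duhamel (hv : Measurable v) : Measurable (duhamel N γ v) :=
  (measurable_duhamelKernel.mul (hv.comp measurable_snd)).lintegral_prod_right'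

lemma lintegral_duhamelKernel_slice (hN : 1 ≤ N) (hγ : 0 < γ) (hγN : γ < N)
    (p : ℝ × EuclideanSpace ℝ (Fin N)) (σ : ℝ) :
    ∫⁻ y, duhamelKernel N γ p (σ, y) = ENNReal.ofReal ((Set.Ioo 0 p.1).indicator
      (fun s => s ^ (-γ / 2) * gaussPotential N γ ((√s)⁻¹ • p.2)) (p.1 - σ)) := by
  by_cases h : 0 < σ ∧ σ < p.1
  · have hs : 0 < p.1 - σ := sub_pos.2 h.2
    simp_rw [duhamelKernel_of_mem (r := (σ, _)) h.1 h.2]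
    rw [Set.indicator_of_mem (show p.1 - σ ∈ Set.Ioo 0 p.1 from ⟨hs, by linarith [h.1]⟩),
      ← integral_heatKernel_mul_norm_rpow hs, ofReal_integral_eq_lintegral_ofReal
        (integrable_heatKernel_mul_norm_rpow hN hγ hγN hs p.2)]
    exact Eventually.of_forall fun y => mul_nonneg (heatKernel_nonneg hs.le _) (by positivity)
  · simp_rw [duhamelKernel_of_notMem (r := (σ, _)) h]
    rw [Set.indicator_of_notMem fun hm => h ⟨by linarith [hm.2], by linarith [hm.1]⟩]
    simp

lemma lintegral_duhamelKernel (hN : 1 ≤ N) (hγ : 0 < γ) (hγN : γ < N) (hγ2 : γ < 2)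
    (p : ℝ × EuclideanSpace ℝ (Fin N)) :
    ∫⁻ r, duhamelKernel N γ p r = ENNReal.ofReal (weightDuhamel N γ p) := by
  rw [Measure.volume_eq_prod,
    lintegral_prod _ (measurable_duhamelKernel_right p).aemeasurable]
  simp_rw [lintegral_duhamelKernel_slice hN hγ hγN p]
  rw [lintegral_sub_left_eq_self (fun s => ENNReal.ofReal ((Set.Ioo 0 p.1).indicator
    (fun s => s ^ (-γ / 2) * gaussPotential N γ ((√s)⁻¹ • p.2)) s)) p.1, weightDuhamel,
    ofReal_integral_eq_lintegral_ofReal]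
  · obtain ⟨C, hC0, hC⟩ := exists_gaussPotential_le hN hγ hγN
    exact (integrable_indicator_rpow hγ2 C p.1).mono'
      (aestronglyMeasurable_weightDuhamel_integrand hN hγ hγN p)
      (Eventually.of_forall (norm_weightDuhamel_integrand_le hC0 hC le_rfl))
  · refine Eventually.of_forall (Set.indicator_nonneg fun s hs => ?_)
    have : 0 < s := hs.1
    exact mul_nonneg (by positivity) (gaussPotential_nonneg _)

/-- Monotonicity of the Duhamel integral, which only sees times in `(0, t)`. -/
lemma duhamel_mono {v w : ℝ × EuclideanSpace ℝ (Fin N) → ℝ≥0∞}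
    {p : ℝ × EuclideanSpace ℝ (Fin N)} (h : ∀ r, r.1 < p.1 → v r ≤ w r) :
    duhamel N γ v p ≤ duhamel N γ w p := by
  refine lintegral_mono fun r => ?_
  by_cases hr : 0 < r.1 ∧ r.1 < p.1
  · exact mul_le_mul_right (h r hr.2) _
  · simp [duhamelKernel_of_notMem hr]

lemma duhamel_const (hN : 1 ≤ N) (hγ : 0 < γ) (hγN : γ < N) (hγ2 : γ < 2) (A : ℝ≥0∞)
    (p : ℝ × EuclideanSpace ℝ (Fin N)) :
    duhamel N γ (fun _ => A) p = ENNReal.ofReal (weightDuhamel N γ p) * A := by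
  rw [duhamel, lintegral_mul_const _ (measurable_duhamelKernel_right p),
    lintegral_duhamelKernel hN hγ hγN hγ2]

lemma tendsto_duhamelKernel {p₀ r : ℝ × EuclideanSpace ℝ (Fin N)} (h0 : 0 < r.1)
    (h1 : r.1 < p₀.1) :
    Tendsto (fun p => duhamelKernel N γ p r) (𝓝 p₀) (𝓝 (duhamelKernel N γ p₀ r)) := by
  have hev : ∀ᶠ p in 𝓝 p₀, r.1 < p.1 := continuousAt_fst.eventually (lt_mem_nhds h1)
  have hK : ContinuousAt (fun p : ℝ × EuclideanSpace ℝ (Fin N) =>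
      heatKernel N (p.1 - r.1) (p.2 - r.2)) p₀ :=
    ContinuousAt.comp (f := fun p : ℝ × EuclideanSpace ℝ (Fin N) => (p.1 - r.1, p.2 - r.2))
      (continuousAt_heatKernel (sub_pos.2 h1)) (by fun_prop)
  rw [duhamelKernel_of_mem h0 h1]
  refine (ENNReal.tendsto_ofReal (hK.tendsto.mul_const (‖r.2‖ ^ (-γ)))).congr' ?_
  filter_upwards [hev] with p hp
  rw [duhamelKernel_of_mem h0 hp]

/-- Lower semicontinuity of the Duhamel integral (Fatou). -/
lemma duhamel_le_liminf (hv : Measurable v) (hfin : ∀ r, v r ≠ ∞)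
    (p₀ : ℝ × EuclideanSpace ℝ (Fin N)) :
    duhamel N γ v p₀ ≤ liminf (duhamel N γ v) (𝓝 p₀) := by
  refine le_trans (lintegral_mono fun r => ?_)
    (lintegral_liminf_le fun p => (measurable_duhamelKernel_right p).mul hv)
  by_cases hr : 0 < r.1 ∧ r.1 < p₀.1
  · exact (ENNReal.Tendsto.mul_const (tendsto_duhamelKernel hr.1 hr.2)
      (Or.inr (hfin r))).liminf_eq.ge
  · simp [duhamelKernel_of_notMem hr]

/-- The Duhamel integral of a locally bounded source is continuous. -/
lemma continuousAt_duhamel (hN : 1 ≤ N) (hγ : 0 < γ) (hγN : γ < N) (hγ2 : γ < 2)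
    (hv : Measurable v) (hfin : ∀ r, v r ≠ ∞) {p₀ : ℝ × EuclideanSpace ℝ (Fin N)} {T : ℝ}
    (hT : p₀.1 < T) {A : ℝ≥0∞} (hA : A ≠ ∞) (hvA : ∀ r, r.1 ≤ T → v r ≤ A) :
    ContinuousAt (duhamel N γ v) p₀ := by
  have hadd : ∀ p : ℝ × EuclideanSpace ℝ (Fin N), p.1 ≤ T →
      duhamel N γ v p + duhamel N γ (fun r => A - v r) p
        = ENNReal.ofReal (weightDuhamel N γ p) * A := by
    intro p hp
    have hm : Measurable fun r => duhamelKernel N γ p r * v r :=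
      (measurable_duhamelKernel_right p).mul hv
    rw [← duhamel_const hN hγ hγN hγ2, duhamel, duhamel, ← lintegral_add_left hm, duhamel]
    refine lintegral_congr fun r => ?_
    by_cases hr : 0 < r.1 ∧ r.1 < p.1
    · rw [← mul_add, add_tsub_cancel_of_le (hvA r (hr.2.le.trans hp))]
    · simp [duhamelKernel_of_notMem hr]
  have hsum := hadd p₀ hT.le
  have hfin₀ : duhamel N γ v p₀ + duhamel N γ (fun r => A - v r) p₀ ≠ ∞ := by
    rw [hsum]
    exact ENNReal.mul_ne_top ENNReal.ofReal_ne_top hA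
  refine tendsto_of_le_liminf_of_add (b := duhamel N γ fun r => A - v r)
    (b₀ := duhamel N γ (fun r => A - v r) p₀) (duhamel_le_liminf hv hfin p₀)
    (duhamel_le_liminf (measurable_const.sub hv) (fun r => ENNReal.sub_ne_top hA) p₀)
    ((continuousAt_fst.eventually (gt_mem_nhds hT)).mono fun p hp => hadd p hp.le) ?_
    (ENNReal.add_ne_top.1 hfin₀).2
  rw [hsum]
  exact ENNReal.Tendsto.mul_const (ENNReal.tendsto_ofReal
    ((continuous_weightDuhamel hN hγ hγN hγ2).tendsto p₀)) (Or.inr hA)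

end Duhamel

section MinimalSolution

variable {N : ℕ} {γ q : ℝ} {u₀ : EuclideanSpace ℝ (Fin N) → ℝ}

/-- Picard iterates for the mild formulation, started from zero. -/
noncomputable def picardIterate (N : ℕ) (γ q : ℝ) (u₀ : EuclideanSpace ℝ (Fin N) → ℝ) :
    ℕ → ℝ × EuclideanSpace ℝ (Fin N) → ℝ≥0∞
  | 0 => fun _ => 0
  | n + 1 => fun p => ENNReal.ofReal (heatFlow N u₀ p) +
      duhamel N γ (fun r => picardIterate N γ q u₀ n r ^ q) p

/-- The minimal mild solution. -/
noncomputable def minimalSolution (N : ℕ) (γ q : ℝ) (u₀ : EuclideanSpace ℝ (Fin N) → ℝ)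
    (p : ℝ × EuclideanSpace ℝ (Fin N)) : ℝ≥0∞ :=
  ⨆ n, picardIterate N γ q u₀ n p

lemma measurable_picardIterate (hu₀ : Continuous u₀) (hu₀v : Tendsto u₀ (cocompact _) (𝓝 0)) (n : ℕ) :
    Measurable (picardIterate N γ q u₀ n) := by
  induction n with
  | zero => exact measurable_const
  | succ n ih =>
    exact (continuous_heatFlow hu₀ hu₀v).measurable.ennreal_ofReal.add
      (measurable_duhamel (ih.pow_const q))

lemma monotone_picardIterate (hq : 0 ≤ q) : Monotone (picardIterate N γ q u₀) := by
  refine monotone_nat_of_le_succ fun n => ?_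
  induction n with
  | zero => exact fun p => zero_le
  | succ n ih =>
    intro p
    refine add_le_add_right (duhamel_mono fun r _ => ?_) _
    exact ENNReal.rpow_le_rpow (ih r) hq

lemma minimalSolution_eq (hq : 0 < q) (hu₀ : Continuous u₀)
    (hu₀v : Tendsto u₀ (cocompact _) (𝓝 0)) (p : ℝ × EuclideanSpace ℝ (Fin N)) :
    minimalSolution N γ q u₀ p = ENNReal.ofReal (heatFlow N u₀ p) +
      duhamel N γ (fun r => minimalSolution N γ q u₀ r ^ q) p := by
  have hmono := monotone_picardIterate (N := N) (γ := γ) (u₀ := u₀) hq.le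
  have hshift : minimalSolution N γ q u₀ p = ⨆ n, picardIterate N γ q u₀ (n + 1) p :=
    (Monotone.iSup_nat_add (f := fun n => picardIterate N γ q u₀ n p) (fun _ _ h => hmono h p) 1).symm
  have hpow : ∀ r, minimalSolution N γ q u₀ r ^ q = ⨆ n, picardIterate N γ q u₀ n r ^ q := fun r =>
    (ENNReal.orderIsoRpow q hq).map_iSup fun n => picardIterate N γ q u₀ n r
  have hdu : duhamel N γ (fun r => minimalSolution N γ q u₀ r ^ q) p
      = ⨆ n, duhamel N γ (fun r => picardIterate N γ q u₀ n r ^ q) p := by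
    simp_rw [duhamel, hpow, ENNReal.mul_iSup]
    refine lintegral_iSup (fun n => (measurable_duhamelKernel_right p).mul
      ((measurable_picardIterate hu₀ hu₀v n).pow_const q)) fun m n hmn r => ?_
    exact mul_le_mul_right (ENNReal.rpow_le_rpow (hmono hmn r) hq.le) _
  rw [hshift, hdu, ENNReal.add_iSup]
  rfl

/-- The sublinear growth of `M ↦ B + K M^q` gives supersolutions. -/
lemma exists_add_mul_rpow_le (hq0 : 0 ≤ q) (hq : q < 1) {B K : ℝ} (hB : 0 ≤ B) (hK : 0 ≤ K) :
    ∃ M, 0 ≤ M ∧ B + K * M ^ q ≤ M := by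
  have hR : 1 ≤ B + K + 1 := by linarith
  have hR0 : 0 < B + K + 1 := by linarith
  have h1q : 0 < 1 - q := by linarith
  refine ⟨(B + K + 1) ^ (1 / (1 - q)), by positivity, ?_⟩
  set M := (B + K + 1) ^ (1 / (1 - q)) with hM
  have hM0 : 0 < M := by positivity
  have hM1 : M ^ (1 - q) = B + K + 1 := by
    rw [hM, ← Real.rpow_mul hR0.le, one_div_mul_cancel h1q.ne', Real.rpow_one]
  have hMq : M = (B + K + 1) * M ^ q := by
    rw [← hM1, ← Real.rpow_add hM0]
    simp
  have hMq1 : 1 ≤ M ^ q := Real.one_le_rpow (Real.one_le_rpow hR (by positivity)) hq0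
  nlinarith

lemma picardIterate_le (hN : 1 ≤ N) (hγ : 0 < γ) (hγN : γ < N) (hγ2 : γ < 2) (hq : 0 ≤ q)
    {B K M T : ℝ} (hB : ∀ x, u₀ x ≤ B) (hB0 : 0 ≤ B) (hM : 0 ≤ M)
    (hK : ∀ p : ℝ × EuclideanSpace ℝ (Fin N), p.1 ≤ T → weightDuhamel N γ p ≤ K)
    (hK0 : 0 ≤ K) (hBKM : B + K * M ^ q ≤ M) (n : ℕ) (p : ℝ × EuclideanSpace ℝ (Fin N))
    (hp : p.1 ≤ T) : picardIterate N γ q u₀ n p ≤ ENNReal.ofReal M := by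
  induction n generalizing p with
  | zero => exact zero_le
  | succ n ih =>
    calc picardIterate N γ q u₀ (n + 1) p
        ≤ ENNReal.ofReal B + duhamel N γ (fun _ => ENNReal.ofReal (M ^ q)) p := by
          refine add_le_add (ENNReal.ofReal_le_ofReal (heatFlow_le hB hB0 p))
            (duhamel_mono fun r hr => ?_)
          rw [← ENNReal.ofReal_rpow_of_nonneg hM hq]
          exact ENNReal.rpow_le_rpow (ih r (hr.le.trans hp)) hq
      _ ≤ ENNReal.ofReal B + ENNReal.ofReal K * ENNReal.ofReal (M ^ q) := by
          rw [duhamel_const hN hγ hγN hγ2]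
          gcongr
          exact hK p hp
      _ ≤ ENNReal.ofReal M := by
          rw [← ENNReal.ofReal_mul hK0, ← ENNReal.ofReal_add hB0 (by positivity)]
          exact ENNReal.ofReal_le_ofReal hBKM

/-- The minimal solution is bounded on every bounded time interval. -/
lemma exists_minimalSolution_le (hN : 1 ≤ N) (hγ : 0 < γ) (hγN : γ < N) (hγ2 : γ < 2)
    (hq0 : 0 ≤ q) (hq1 : q < 1) (hu₀ : Continuous u₀) (hu₀v : Tendsto u₀ (cocompact _) (𝓝 0))
    (T : ℝ) : ∃ M : ℝ, ∀ p : ℝ × EuclideanSpace ℝ (Fin N), p.1 ≤ T →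
      minimalSolution N γ q u₀ p ≤ ENNReal.ofReal M := by
  obtain ⟨B, hB0, hB⟩ := exists_norm_le_of_tendsto_cocompact hu₀ hu₀v
  obtain ⟨K, hK0, hK⟩ := exists_weightDuhamel_le hN hγ hγN hγ2 T
  obtain ⟨M, hM0, hM⟩ := exists_add_mul_rpow_le hq0 hq1 hB0 hK0
  exact ⟨M, fun p hp => iSup_le fun n => picardIterate_le hN hγ hγN hγ2 hq0
    (fun x => (Real.le_norm_self _).trans (hB x)) hB0 hM0 hK hK0 hM n p hp⟩

end MinimalSolution

section Conclusion

variable {N : ℕ} {γ : ℝ}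

/-- A jointly continuous function vanishing at spatial infinity, uniformly on bounded time
intervals, is continuous in time with respect to the sup norm. -/
lemma exists_forall_abs_sub_le {f : ℝ × EuclideanSpace ℝ (Fin N) → ℝ} (hf : Continuous f)
    (hf0 : ∀ T, Tendsto f (𝓟 (Set.Iic T) ×ˢ cocompact _) (𝓝 0)) (t₀ : ℝ) {ε : ℝ} (hε : 0 < ε) :
    ∃ δ > 0, ∀ t, |t - t₀| < δ → ∀ x, |f (t, x) - f (t₀, x)| ≤ ε := by
  have h1 : ∀ᶠ p in 𝓟 (Set.Iic (t₀ + 1)) ×ˢ cocompact (EuclideanSpace ℝ (Fin N)),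
      |f p| < ε / 2 := by
    have := (hf0 (t₀ + 1)).abs
    rw [abs_zero] at this
    exact this.eventually (gt_mem_nhds (half_pos hε))
  rw [eventually_prod_iff] at h1
  obtain ⟨P, hP, Q, hQ, hPQ⟩ := h1
  obtain ⟨K, hK, hKQ⟩ := mem_cocompact.1 hQ
  have h2 : ∀ᶠ t in 𝓝 t₀, ∀ x ∈ K, |f (t, x) - f (t₀, x)| < ε := by
    refine hK.eventually_forall_of_forall_eventually fun x _ => ?_
    have hc : Continuous fun z : ℝ × EuclideanSpace ℝ (Fin N) => |f (z.1, z.2) - f (t₀, z.2)| := by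
      fun_prop
    exact hc.continuousAt.eventually (gt_mem_nhds (by simpa using hε))
  have h3 : ∀ᶠ t in 𝓝 t₀, t ≤ t₀ + 1 := (gt_mem_nhds (lt_add_one t₀)).mono fun t ht => le_of_lt ht
  obtain ⟨δ, hδ, hball⟩ := Metric.eventually_nhds_iff.1 (h2.and h3)
  refine ⟨δ, hδ, fun t ht x => ?_⟩
  obtain ⟨h4, h5⟩ := hball (y := t) (by rwa [Real.dist_eq])
  by_cases hx : x ∈ K
  · exact (h4 x hx).le
  · have ha := hPQ (eventually_principal.1 hP t h5) (hKQ hx)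
    have hb := hPQ (eventually_principal.1 hP t₀ (by simp)) (hKQ hx)
    have := abs_sub (f (t, x)) (f (t₀, x))
    linarith

/-- The Duhamel integral as an iterated Bochner integral. -/
lemma toReal_duhamel {v : ℝ × EuclideanSpace ℝ (Fin N) → ℝ≥0∞} (hv : Measurable v)
    (hfin : ∀ r, v r ≠ ∞) {t : ℝ} (ht : 0 ≤ t) (x : EuclideanSpace ℝ (Fin N))
    (hD : duhamel N γ v (t, x) ≠ ∞) :
    (duhamel N γ v (t, x)).toReal = ∫ σ in (0 : ℝ)..t, ∫ y,
      heatKernel N (t - σ) (x - y) * ‖y‖ ^ (-γ) * (v (σ, y)).toReal := by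
  have hm : Measurable fun r => duhamelKernel N γ (t, x) r * v r :=
    (measurable_duhamelKernel_right _).mul hv
  have hm2 : Measurable fun σ => ∫⁻ y, duhamelKernel N γ (t, x) (σ, y) * v (σ, y) :=
    hm.lintegral_prod_right'
  have hD2 : duhamel N γ v (t, x)
      = ∫⁻ σ, ∫⁻ y, duhamelKernel N γ (t, x) (σ, y) * v (σ, y) := by
    rw [duhamel, Measure.volume_eq_prod, lintegral_prod _ hm.aemeasurable]
  rw [hD2] at hD ⊢
  rw [← integral_toReal hm2.aemeasurable (ae_lt_top hm2 hD),
    intervalIntegral.integral_of_le ht, integral_Ioc_eq_integral_Ioo,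
    ← integral_indicator measurableSet_Ioo]
  refine integral_congr_ae (Eventually.of_forall fun σ => ?_)
  by_cases hσ : σ ∈ Set.Ioo 0 t
  · simp only [Set.indicator_of_mem hσ]
    have hker : ∀ y, duhamelKernel N γ (t, x) (σ, y)
        = ENNReal.ofReal (heatKernel N (t - σ) (x - y) * ‖y‖ ^ (-γ)) := fun y =>
      duhamelKernel_of_mem (p := (t, x)) (r := (σ, y)) hσ.1 hσ.2
    have hmσ : Measurable fun y => duhamelKernel N γ (t, x) (σ, y) * v (σ, y) :=
      hm.comp measurable_prodMk_left
    rw [← integral_toReal hmσ.aemeasurable]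
    · refine integral_congr_ae (Eventually.of_forall fun y => ?_)
      simp only [ENNReal.toReal_mul, hker]
      rw [ENNReal.toReal_ofReal (mul_nonneg (heatKernel_nonneg (sub_pos.2 hσ.2).le _)
        (by positivity))]
    · refine Eventually.of_forall fun y => ?_
      simp only [hker]
      exact ENNReal.mul_lt_top ENNReal.ofReal_lt_top (hfin _).lt_top
  · have hker : ∀ y, duhamelKernel N γ (t, x) (σ, y) = 0 := fun y =>
      duhamelKernel_of_notMem (p := (t, x)) (r := (σ, y)) hσ
    simp [Set.indicator_of_notMem hσ, hker]

end Conclusion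

end HeatEquation

open HeatEquation

/-- Existence of a non-negative global solution of `u_t - Δu = |x|^{-γ} u^q`,
`0 < q < 1`, `0 < γ < min{2,N}`, with non-negative initial data
`u₀ ∈ C₀(ℝ^N)`, in the mild (integral) formulation. -/
theorem existence_global_solution (N : ℕ) (hN : 1 ≤ N) (q γ : ℝ)
    (hq0 : 0 < q) (hq1 : q < 1) (hγ0 : 0 < γ) (hγ : γ < min 2 (N : ℝ))
    (u₀ : EuclideanSpace ℝ (Fin N) → ℝ)
    (hu₀c : Continuous u₀)
    (hu₀v : Tendsto u₀ (cocompact (EuclideanSpace ℝ (Fin N))) (nhds 0))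
    (hu₀nn : ∀ x, 0 ≤ u₀ x) :
    ∃ u : EuclideanSpace ℝ (Fin N) → ℝ → ℝ,
      -- u is non-negative
      (∀ x t, 0 ≤ t → 0 ≤ u x t) ∧
      -- for every t ≥ 0, x ↦ u(x,t) is continuous and vanishes at infinity
      (∀ t, 0 ≤ t → Continuous (fun x => u x t)) ∧
      (∀ t, 0 ≤ t → Tendsto (fun x => u x t)
        (cocompact (EuclideanSpace ℝ (Fin N))) (nhds 0)) ∧
      -- t ↦ u(·,t) is continuous from [0,∞) into (C₀, sup norm)
      (∀ t₀, 0 ≤ t₀ → ∀ ε > (0 : ℝ), ∃ δ > (0 : ℝ), ∀ t, 0 ≤ t → |t - t₀| < δ →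
        ∀ x, |u x t - u x t₀| ≤ ε) ∧
      -- initial condition (the integral equation at t = 0)
      (∀ x, u x 0 = u₀ x) ∧
      -- the integral equation for t > 0
      (∀ t, 0 < t → ∀ x,
        u x t = (∫ y, heatKernel N t (x - y) * u₀ y) +
          ∫ σ in (0 : ℝ)..t, ∫ y,
            heatKernel N (t - σ) (x - y) * ‖y‖ ^ (-γ) * u y σ ^ q) := by
  have hγ2 : γ < 2 := hγ.trans_le (min_le_left _ _)
  have hγN : γ < N := hγ.trans_le (min_le_right _ _)
  let U := minimalSolution N γ q u₀
  have hUmeas : Measurable U := Measurable.iSup fun n => measurable_picardIterate hu₀c hu₀v n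
  have hUle := exists_minimalSolution_le hN hγ0 hγN hγ2 hq0.le hq1 hu₀c hu₀v
  have hUfin : ∀ p, U p ≠ ⊤ := fun p => by
    obtain ⟨M, hM⟩ := hUle p.1
    exact ((hM p le_rfl).trans_lt ENNReal.ofReal_lt_top).ne
  have hVmeas : Measurable fun r => U r ^ q := hUmeas.pow_const q
  have hVfin : ∀ r, U r ^ q ≠ ⊤ := fun r => ENNReal.rpow_ne_top_of_nonneg hq0.le (hUfin r)
  have hVle : ∀ T, ∃ A : ENNReal, A ≠ ⊤ ∧ ∀ r, r.1 ≤ T → U r ^ q ≤ A := fun T => by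
    obtain ⟨M, hM⟩ := hUle T
    exact ⟨ENNReal.ofReal M ^ q, ENNReal.rpow_ne_top_of_nonneg hq0.le ENNReal.ofReal_ne_top,
      fun r hr => ENNReal.rpow_le_rpow (hM r hr) hq0.le⟩
  let D := duhamel N γ fun r => U r ^ q
  have hUeq : ∀ p, U p = ENNReal.ofReal (heatFlow N u₀ p) + D p :=
    minimalSolution_eq hq0 hu₀c hu₀v
  have hDfin : ∀ p, D p ≠ ⊤ := fun p h => hUfin p (by rw [hUeq, h, add_top])
  have hDcont : Continuous fun p => (D p).toReal := by
    refine continuous_iff_continuousAt.2 fun p => ?_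
    obtain ⟨A, hA, hvA⟩ := hVle (p.1 + 1)
    exact (ENNReal.tendsto_toReal (hDfin p)).comp (continuousAt_duhamel hN hγ0 hγN hγ2 hVmeas hVfin
      (lt_add_one p.1) hA hvA)
  have hDlim : ∀ T, Tendsto (fun p => (D p).toReal)
      (𝓟 (Set.Iic T) ×ˢ cocompact (EuclideanSpace ℝ (Fin N))) (nhds 0) := by
    intro T
    obtain ⟨A, hA, hvA⟩ := hVle T
    have h := (ENNReal.tendsto_toReal (by simp)).comp (ENNReal.Tendsto.mul_const
      (ENNReal.tendsto_ofReal (tendsto_weightDuhamel hN hγ0 hγN hγ2 T)) (Or.inr hA))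
    rw [ENNReal.ofReal_zero, zero_mul, ENNReal.toReal_zero] at h
    refine squeeze_zero' (Eventually.of_forall fun p => ENNReal.toReal_nonneg) ?_ h
    have hT : ∀ᶠ p : ℝ × EuclideanSpace ℝ (Fin N) in
        𝓟 (Set.Iic T) ×ˢ cocompact (EuclideanSpace ℝ (Fin N)), p.1 ≤ T :=
      tendsto_fst.eventually (eventually_principal.2 fun _ h => h)
    filter_upwards [hT] with p hp
    refine ENNReal.toReal_mono (ENNReal.mul_ne_top ENNReal.ofReal_ne_top hA) ?_
    simp only [← duhamel_const hN hγ0 hγN hγ2]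
    exact duhamel_mono fun r hr => hvA r (hr.le.trans hp)
  let f : ℝ × EuclideanSpace ℝ (Fin N) → ℝ := fun p => heatFlow N u₀ p + (D p).toReal
  have hfU : ∀ p, f p = (U p).toReal := fun p => by
    rw [hUeq, ENNReal.toReal_add ENNReal.ofReal_ne_top (hDfin p),
      ENNReal.toReal_ofReal (heatFlow_nonneg hu₀nn p)]
  have hfcont : Continuous f := (continuous_heatFlow hu₀c hu₀v).add hDcont
  have hflim : ∀ T, Tendsto f (𝓟 (Set.Iic T) ×ˢ cocompact (EuclideanSpace ℝ (Fin N)))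
      (nhds 0) := fun T => by
    simpa using (tendsto_heatFlow hu₀c hu₀v T).add (hDlim T)
  refine ⟨fun x t => f (t, x), fun x t _ => ?_, fun t _ => by fun_prop, fun t _ => ?_,
    fun t₀ _ ε hε => ?_, fun x => ?_, fun t ht x => ?_⟩
  · simp only [hfU]
    exact ENNReal.toReal_nonneg
  · refine (hflim t).comp (Tendsto.prodMk ?_ tendsto_id)
    exact tendsto_principal.2 (Eventually.of_forall fun _ => Set.self_mem_Iic)
  · obtain ⟨δ, hδ, h⟩ := exists_forall_abs_sub_le hfcont hflim t₀ hε
    exact ⟨δ, hδ, fun t _ => h t⟩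
  · have hD0 : D (0, x) = 0 := by
      have hker : ∀ r, duhamelKernel N γ ((0 : ℝ), x) r = 0 := fun r =>
        duhamelKernel_of_notMem fun h => (h.1.trans h.2).false
      simp [D, duhamel, hker]
    simp [f, hD0, heatFlow_zero]
  · have h := toReal_duhamel hVmeas hVfin ht.le x (hDfin (t, x))
    simp only [f]
    rw [h, heatFlow, ← integral_heatKernel_mul ht]
    simp only [← ENNReal.toReal_rpow, ← hfU, f]
end

section
/- Let N ≥ 1, 0 < q < 1 and 0 < γ < min{2, N}. Set η₀ = (4π)^{−N/2} ∫_{ℝ^N} exp(−|z|²/4) (1+|z|)^{−γ/(1−q)} dz and λ = [(1−q) η₀]^{1/(1−q)}, and define w(x,t) = λ t^{1/(1−q)} (|x| + √t)^{−γ/(1−q)} for t > 0, with w(x,0) = 0. Then: (a) for every t ≥ 0 the map x ↦ w(x,t) is continuous and vanishes at infinity, sup_x |w(x,t)| ≤ λ t^{(1−γ/2)/(1−q)}, and t ↦ w(·,t) is continuous into the bounded continuous functions with the sup norm; (b) for all t > 0 and x ∈ ℝ^N one has w(x,t) ≤ ∫₀ᵗ ∫_{ℝ^N} G_{t−σ}(x−y)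 |y|^{−γ} w(y,σ)^q dy dσ, i.e., w is a sub-solution of the integral equation with zero initial data. -/
open MeasureTheory Filter Real

section HeatKernel

variable {N : ℕ}

lemma integrable_exp_neg_norm_sq_div_four :
    Integrable (fun z : EuclideanSpace ℝ (Fin N) => Real.exp (-‖z‖ ^ 2 / 4)) := by
  have h := (GaussianFourier.integrable_cexp_neg_mul_sq_norm_add
    (V := EuclideanSpace ℝ (Fin N)) (b := 1 / 4) (by norm_num) 0 0).norm
  refine h.congr (Eventually.of_forall fun z => ?_)
  simp only [Complex.norm_exp]
  congr 1
  have : (-(1 / 4 : ℂ) * (‖z‖ : ℂ) ^ 2 + 0 * ((inner ℝ (0 : EuclideanSpace ℝ (Fin N)) z : ℝ) : ℂ))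
      = ((-‖z‖ ^ 2 / 4 : ℝ) : ℂ) := by
    push_cast
    ring
  rw [this, Complex.ofReal_re]

lemma heatKernel_sqrt_smul {s : ℝ} (hs : 0 < s) (z : EuclideanSpace ℝ (Fin N)) :
    heatKernel N s (√s • z) =
      (√s ^ N)⁻¹ * ((4 * π) ^ (-(N : ℝ) / 2) * Real.exp (-‖z‖ ^ 2 / 4)) := by
  have h1 : ‖√s • z‖ ^ 2 = s * ‖z‖ ^ 2 := by
    rw [norm_smul, mul_pow, Real.norm_eq_abs, sq_abs, Real.sq_sqrt hs.le]
  have h2 : s ^ (-(N : ℝ) / 2) = (√s ^ N)⁻¹ := by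
    rw [Real.sqrt_eq_rpow, ← Real.rpow_natCast, ← Real.rpow_mul hs.le, ← Real.rpow_neg hs.le]
    congr 1
    ring
  have h3 : -(s * ‖z‖ ^ 2) / (4 * s) = -‖z‖ ^ 2 / 4 := by
    field_simp
  rw [heatKernel, h1, h3, Real.mul_rpow (by positivity) hs.le, h2]
  ring

/-- The heat semigroup in self-similar variables. -/
lemma integral_heatKernel_mul {s : ℝ} (hs : 0 < s) (x : EuclideanSpace ℝ (Fin N))
    (f : EuclideanSpace ℝ (Fin N) → ℝ) :
    ∫ y, heatKernel N s (x - y) * f y =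
      (4 * π) ^ (-(N : ℝ) / 2) * ∫ z, Real.exp (-‖z‖ ^ 2 / 4) * f (x - √s • z) := by
  have h := Measure.integral_comp_smul volume (fun y => heatKernel N s y * f (x - y)) (√s)
  have hpos : 0 < √s ^ N := pow_pos (Real.sqrt_pos.2 hs) N
  simp only [heatKernel_sqrt_smul hs, finrank_euclideanSpace_fin, smul_eq_mul,
    abs_of_pos (inv_pos.2 hpos)] at h
  have h2 := integral_sub_left_eq_self (fun y => heatKernel N s y * f (x - y)) volume x
  simp only [sub_sub_cancel] at h2
  rw [h2, ← mul_right_inj' (inv_pos.2 hpos).ne', ← h, ← integral_const_mul, ← integral_const_mul]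
  congr 1
  ext z
  ring

/-- The heat semigroup applied to `|y|^{-γ}` is bounded by a multiple of `s^{-γ/2}`. -/
lemma exists_integral_gaussian_mul_norm_rpow_le (hN : 1 ≤ N) {γ : ℝ} (hγ0 : 0 < γ)
    (hγ : γ < N) :
    ∃ C : ℝ, ∀ x : EuclideanSpace ℝ (Fin N), ∀ s : ℝ, 0 < s →
      Integrable (fun z => Real.exp (-‖z‖ ^ 2 / 4) * ‖x - √s • z‖ ^ (-γ)) ∧
      ∫ z, Real.exp (-‖z‖ ^ 2 / 4) * ‖x - √s • z‖ ^ (-γ) ≤ C * s ^ (-(γ / 2)) := by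
  set g : EuclideanSpace ℝ (Fin N) → ℝ :=
    (Metric.ball 0 1).indicator (fun z => ‖z‖ ^ (-γ)) with hg
  have hgint : Integrable g := by
    rw [hg, integrable_indicator_iff Metric.isOpen_ball.measurableSet]
    refine integrableOn_ball_of_norm_le_rpow (C := 1) (α := γ) (by simpa using hN)
      (by simpa using hγ) (Eventually.of_forall fun z => ?_)
      (measurable_norm.pow_const _).aestronglyMeasurable
    rw [one_mul, Real.norm_of_nonneg (by positivity)]
  have hg0 : ∀ z, 0 ≤ g z := fun z => Set.indicator_nonneg (fun _ _ => by positivity) z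
  have hE := integrable_exp_neg_norm_sq_div_four (N := N)
  refine ⟨(∫ z : EuclideanSpace ℝ (Fin N), Real.exp (-‖z‖ ^ 2 / 4)) + ∫ z, g z,
    fun x s hs => ?_⟩
  have hsq : 0 < √s := Real.sqrt_pos.2 hs
  set v := (√s)⁻¹ • x with hv
  have hdom : Integrable (fun z => s ^ (-(γ / 2)) * (Real.exp (-‖z‖ ^ 2 / 4) + g (v - z))) :=
    (hE.add (hgint.comp_sub_left v)).const_mul _
  have hle : ∀ z, Real.exp (-‖z‖ ^ 2 / 4) * ‖x - √s • z‖ ^ (-γ) ≤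
      s ^ (-(γ / 2)) * (Real.exp (-‖z‖ ^ 2 / 4) + g (v - z)) := by
    intro z
    have h1 : x - √s • z = √s • (v - z) := by
      rw [hv, smul_sub, smul_inv_smul₀ hsq.ne']
    have h2 : √s ^ (-γ) = s ^ (-(γ / 2)) := by
      rw [Real.sqrt_eq_rpow, ← Real.rpow_mul hs.le]
      congr 1
      ring
    rw [h1, norm_smul, Real.norm_of_nonneg hsq.le, Real.mul_rpow hsq.le (norm_nonneg _), h2,
      mul_left_comm]
    refine mul_le_mul_of_nonneg_left ?_ (by positivity)
    have he1 : Real.exp (-‖z‖ ^ 2 / 4) ≤ 1 := by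
      rw [Real.exp_le_one_iff]
      have := sq_nonneg ‖z‖
      linarith
    by_cases hb : v - z ∈ Metric.ball (0 : EuclideanSpace ℝ (Fin N)) 1
    · rw [hg, Set.indicator_of_mem hb]
      have h3 : 0 ≤ ‖v - z‖ ^ (-γ) := by positivity
      have h4 := Real.exp_pos (-‖z‖ ^ 2 / 4)
      nlinarith
    · have h5 : 1 ≤ ‖v - z‖ := by simpa using hb
      have h6 := Real.rpow_le_one_of_one_le_of_nonpos h5 (by linarith : -γ ≤ 0)
      have h4 := Real.exp_pos (-‖z‖ ^ 2 / 4)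
      nlinarith [hg0 (v - z)]
  have hmeas : Measurable
      (fun z : EuclideanSpace ℝ (Fin N) => Real.exp (-‖z‖ ^ 2 / 4) * ‖x - √s • z‖ ^ (-γ)) := by
    fun_prop
  have hint : Integrable
      (fun z : EuclideanSpace ℝ (Fin N) => Real.exp (-‖z‖ ^ 2 / 4) * ‖x - √s • z‖ ^ (-γ)) := by
    refine hdom.mono' hmeas.aestronglyMeasurable (Eventually.of_forall fun z => ?_)
    rw [Real.norm_of_nonneg (by positivity)]
    exact hle z
  refine ⟨hint, (integral_mono hint hdom hle).trans_eq ?_⟩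
  rw [integral_const_mul, integral_add hE (hgint.comp_sub_left v),
    integral_sub_left_eq_self g volume v, mul_comm]

end HeatKernel

section SelfSimilar

/-- Uniform continuity in `t`, with respect to the parameter `r ≥ 0`, of the profile
`t^p (r + √t)^{-a}`. -/
lemma exists_forall_abs_profile_sub_le {p a t₀ ε : ℝ} (ha : 0 ≤ a) (ht₀ : 0 < t₀) (hε : 0 < ε) :
    ∃ δ > (0 : ℝ), ∀ t, 0 < t → |t - t₀| < δ → ∀ r : ℝ, 0 ≤ r →
      |t ^ p * (r + √t) ^ (-a) - t₀ ^ p * (r + √t₀) ^ (-a)| ≤ ε := by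
  have hs₀ : 0 < √t₀ := Real.sqrt_pos.2 ht₀
  set A := √t₀ ^ (-a) with hA
  have hApos : 0 < A := by positivity
  have hcont : ContinuousAt (fun u : ℝ × ℝ => u.1 ^ p * u.2 ^ (-a)) (t₀, 1) :=
    (continuousAt_fst.rpow_const (Or.inl ht₀.ne')).mul
      (continuousAt_snd.rpow_const (Or.inl one_ne_zero))
  obtain ⟨δ₁, hδ₁, h₁⟩ := Metric.continuousAt_iff.1 hcont (ε / A) (by positivity)
  obtain ⟨δ₂, hδ₂, h₂⟩ := Metric.continuousAt_iff.1 (Real.continuous_sqrt.continuousAt (x := t₀))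
    (δ₁ * √t₀) (by positivity)
  refine ⟨min δ₁ δ₂, lt_min hδ₁ hδ₂, fun t ht htd r hr => ?_⟩
  have hs : 0 < √t := Real.sqrt_pos.2 ht
  have hr₀ : 0 < r + √t₀ := by positivity
  set D := (r + √t) / (r + √t₀) with hD
  have hDpos : 0 < D := by positivity
  have hD1 : |D - 1| < δ₁ := by
    have h3 : |√t - √t₀| < δ₁ * √t₀ := h₂ (htd.trans_le (min_le_right _ _))
    have h4 : D - 1 = (√t - √t₀) / (r + √t₀) := by
      rw [hD]
      field_simp
      ring
    rw [h4, abs_div, abs_of_pos hr₀, div_lt_iff₀ hr₀]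
    nlinarith
  have h5 := h₁ (x := (t, D)) (by
    rw [Prod.dist_eq]
    exact max_lt (htd.trans_le (min_le_left _ _)) hD1)
  rw [Real.dist_eq] at h5
  simp only [Real.one_rpow, mul_one] at h5
  have h6 : (r + √t) ^ (-a) = (r + √t₀) ^ (-a) * D ^ (-a) := by
    rw [← Real.mul_rpow hr₀.le hDpos.le, hD, mul_div_cancel₀ _ hr₀.ne']
  have h7 : (r + √t₀) ^ (-a) ≤ A :=
    Real.rpow_le_rpow_of_nonpos hs₀ (by linarith) (by linarith)
  have h8 : t ^ p * (r + √t) ^ (-a) - t₀ ^ p * (r + √t₀) ^ (-a) =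
      (r + √t₀) ^ (-a) * (t ^ p * D ^ (-a) - t₀ ^ p) := by
    rw [h6]
    ring
  rw [h8, abs_mul, abs_of_nonneg (by positivity)]
  calc (r + √t₀) ^ (-a) * |t ^ p * D ^ (-a) - t₀ ^ p| ≤ A * (ε / A) :=
        mul_le_mul h7 h5.le (abs_nonneg _) hApos.le
    _ = ε := by field_simp

lemma profile_le {p a t r : ℝ} (ha : 0 ≤ a) (ht : 0 < t) (hr : 0 ≤ r) :
    t ^ p * (r + √t) ^ (-a) ≤ t ^ (p - a / 2) := by
  have hs : 0 < √t := Real.sqrt_pos.2 ht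
  have h1 : (r + √t) ^ (-a) ≤ √t ^ (-a) :=
    Real.rpow_le_rpow_of_nonpos hs (by linarith) (by linarith)
  have h2 : √t ^ (-a) = t ^ (-(a / 2)) := by
    rw [Real.sqrt_eq_rpow, ← Real.rpow_mul ht.le]
    congr 1
    ring
  rw [h2] at h1
  rw [sub_eq_add_neg, Real.rpow_add ht]
  gcongr

variable {N : ℕ}

/-- Lower bound for the nonlinearity `|y|^{-γ} w(y,σ)^q` at `y = x - √(t-σ) z`. -/
lemma le_norm_rpow_mul_profile {q γ l t σ : ℝ} (hq1 : q < 1) (hγ0 : 0 < γ)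
    (hl : 0 ≤ l) (hσ : 0 < σ) (hσt : σ < t) {x z : EuclideanSpace ℝ (Fin N)}
    (hy : x - √(t - σ) • z ≠ 0) :
    l ^ q * σ ^ (q / (1 - q)) * (‖x‖ + √t) ^ (-γ / (1 - q)) * (1 + ‖z‖) ^ (-γ / (1 - q)) ≤
      ‖x - √(t - σ) • z‖ ^ (-γ) *
        (l * σ ^ (1 / (1 - q)) * (‖x - √(t - σ) • z‖ + √σ) ^ (-γ / (1 - q))) ^ q := by
  have hq : 0 < 1 - q := by linarith
  set y := x - √(t - σ) • z with hydef
  have hn : 0 < ‖y‖ := norm_pos_iff.2 hy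
  have hsσ : 0 < √σ := Real.sqrt_pos.2 hσ
  have hst : √(t - σ) ≤ √t := Real.sqrt_le_sqrt (by linarith)
  have hst' : √σ ≤ √t := Real.sqrt_le_sqrt hσt.le
  have hle : ‖y‖ + √σ ≤ (‖x‖ + √t) * (1 + ‖z‖) := by
    have h1 : ‖y‖ ≤ ‖x‖ + √(t - σ) * ‖z‖ := by
      refine (norm_sub_le _ _).trans_eq ?_
      rw [norm_smul, Real.norm_of_nonneg (Real.sqrt_nonneg _)]
    nlinarith [norm_nonneg x, norm_nonneg z, mul_nonneg (norm_nonneg x) (norm_nonneg z),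
      mul_le_mul_of_nonneg_right hst (norm_nonneg z)]
  have hneg : -γ / (1 - q) ≤ 0 := div_nonpos_of_nonpos_of_nonneg (by linarith) hq.le
  have hR : (l * σ ^ (1 / (1 - q)) * (‖y‖ + √σ) ^ (-γ / (1 - q))) ^ q =
      l ^ q * σ ^ (q / (1 - q)) * (‖y‖ + √σ) ^ (-γ / (1 - q) * q) := by
    rw [Real.mul_rpow (by positivity) (by positivity), Real.mul_rpow hl (by positivity),
      ← Real.rpow_mul hσ.le, ← Real.rpow_mul (by positivity)]
    congr 3
    ring
  have h2 : (‖x‖ + √t) ^ (-γ / (1 - q)) * (1 + ‖z‖) ^ (-γ / (1 - q)) ≤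
      (‖y‖ + √σ) ^ (-γ / (1 - q)) := by
    rw [← Real.mul_rpow (by positivity) (by positivity)]
    exact Real.rpow_le_rpow_of_nonpos (by positivity) hle hneg
  have h3 : (‖y‖ + √σ) ^ (-γ / (1 - q)) =
      (‖y‖ + √σ) ^ (-γ) * (‖y‖ + √σ) ^ (-γ / (1 - q) * q) := by
    rw [← Real.rpow_add (by positivity)]
    congr 1
    field_simp
    ring
  have h4 : (‖y‖ + √σ) ^ (-γ) ≤ ‖y‖ ^ (-γ) :=
    Real.rpow_le_rpow_of_nonpos hn (by linarith) (by linarith)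
  rw [hR]
  calc l ^ q * σ ^ (q / (1 - q)) * (‖x‖ + √t) ^ (-γ / (1 - q)) * (1 + ‖z‖) ^ (-γ / (1 - q))
      = l ^ q * σ ^ (q / (1 - q)) *
        ((‖x‖ + √t) ^ (-γ / (1 - q)) * (1 + ‖z‖) ^ (-γ / (1 - q))) := by ring
    _ ≤ l ^ q * σ ^ (q / (1 - q)) * (‖y‖ ^ (-γ) * (‖y‖ + √σ) ^ (-γ / (1 - q) * q)) := by
        refine mul_le_mul_of_nonneg_left ?_ (by positivity)
        rw [h3] at h2
        exact h2.trans (mul_le_mul_of_nonneg_right h4 (by positivity))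
    _ = _ := by ring

end SelfSimilar

/-- The function `w(x,t) = λ t^{1/(1-q)} (|x|+√t)^{-γ/(1-q)}` (with `w(·,0)=0`
and `λ = [(1-q)η₀]^{1/(1-q)}`) belongs to `C([0,∞); C₀(ℝ^N))`, satisfies
`‖w(·,t)‖_∞ ≤ λ t^{(1-γ/2)/(1-q)}`, and is a sub-solution of the integral
equation for `u_t - Δu = |x|^{-γ} u^q` with zero initial data. -/
theorem subsolution_w (N : ℕ) (hN : 1 ≤ N) (q γ : ℝ)
    (hq0 : 0 < q) (hq1 : q < 1) (hγ0 : 0 < γ) (hγ : γ < min 2 (N : ℝ))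
    (η₀ lam : ℝ)
    (hη₀ : η₀ = (4 * π) ^ (-(N : ℝ) / 2) *
      ∫ z : EuclideanSpace ℝ (Fin N),
        Real.exp (-‖z‖ ^ 2 / 4) * (1 + ‖z‖) ^ (-γ / (1 - q)))
    (hlam : lam = ((1 - q) * η₀) ^ (1 / (1 - q)))
    (w : EuclideanSpace ℝ (Fin N) → ℝ → ℝ)
    (hw0 : ∀ x, w x 0 = 0)
    (hw : ∀ x, ∀ t : ℝ, 0 < t →
      w x t = lam * t ^ (1 / (1 - q)) * (‖x‖ + Real.sqrt t) ^ (-γ / (1 - q))) :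
    -- (a) for every t ≥ 0, x ↦ w(x,t) is continuous and vanishes at infinity
    (∀ t, 0 ≤ t → Continuous (fun x => w x t)) ∧
    (∀ t, 0 ≤ t → Tendsto (fun x => w x t)
      (cocompact (EuclideanSpace ℝ (Fin N))) (nhds 0)) ∧
    -- sup_x |w(x,t)| ≤ λ t^{(1-γ/2)/(1-q)}
    (∀ t, 0 ≤ t → ∀ x, |w x t| ≤ lam * t ^ ((1 - γ / 2) / (1 - q))) ∧
    -- t ↦ w(·,t) is continuous from [0,∞) into (C₀, sup norm)
    (∀ t₀, 0 ≤ t₀ → ∀ ε > (0 : ℝ), ∃ δ > (0 : ℝ), ∀ t, 0 ≤ t →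
      |t - t₀| < δ → ∀ x, |w x t - w x t₀| ≤ ε) ∧
    -- (b) w is a sub-solution of the integral equation with zero initial data
    (∀ t, 0 < t → ∀ x,
      w x t ≤ ∫ σ in (0 : ℝ)..t, ∫ y,
        heatKernel N (t - σ) (x - y) * ‖y‖ ^ (-γ) * w y σ ^ q) := by
  have hq : 0 < 1 - q := by linarith
  obtain ⟨hγ2, hγN⟩ := lt_min_iff.1 hγ
  have ha : 0 < γ / (1 - q) := div_pos hγ0 hq
  have hneg : -γ / (1 - q) = -(γ / (1 - q)) := neg_div _ _
  have hη : 0 ≤ η₀ := by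
    rw [hη₀]
    exact mul_nonneg (by positivity) (integral_nonneg fun z => by positivity)
  have hl : 0 ≤ lam := by
    rw [hlam]
    positivity
  have hb : 0 < (1 - γ / 2) / (1 - q) := div_pos (by linarith) hq
  have hexp : 1 / (1 - q) - γ / (1 - q) / 2 = (1 - γ / 2) / (1 - q) := by
    field_simp
  have hwpos : ∀ t, 0 ≤ t → ∀ x, 0 ≤ w x t := by
    intro t ht x
    rcases ht.eq_or_lt with rfl | ht
    · rw [hw0]
    · rw [hw x t ht]
      positivity
  have hbound : ∀ t, 0 ≤ t → ∀ x, |w x t| ≤ lam * t ^ ((1 - γ / 2) / (1 - q)) := by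
    intro t ht x
    rw [abs_of_nonneg (hwpos t ht x)]
    rcases ht.eq_or_lt with rfl | ht
    · rw [hw0]
      positivity
    · rw [hw x t ht, mul_assoc, ← hexp, hneg]
      exact mul_le_mul_of_nonneg_left (profile_le ha.le ht (norm_nonneg x)) hl
  have hcont : ∀ t, 0 ≤ t → Continuous (fun x => w x t) := by
    intro t ht
    rcases ht.eq_or_lt with rfl | ht
    · simp only [hw0]
      exact continuous_const
    · simp only [hw _ t ht]
      refine continuous_const.mul ((continuous_norm.add continuous_const).rpow_const fun x => ?_)
      exact Or.inl (add_pos_of_nonneg_of_pos (norm_nonneg x) (Real.sqrt_pos.2 ht)).ne'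
  refine ⟨hcont, ?_, hbound, ?_, ?_⟩
  · intro t ht
    rcases ht.eq_or_lt with rfl | ht
    · simp only [hw0]
      exact tendsto_const_nhds
    · simp only [hw _ t ht, hneg]
      have h := (tendsto_rpow_neg_atTop ha).comp
        (tendsto_atTop_add_const_right _ (√t)
          (tendsto_norm_cocompact_atTop (E := EuclideanSpace ℝ (Fin N))))
      simpa using h.const_mul (lam * t ^ (1 / (1 - q)))
  · intro t₀ ht₀ ε hε
    rcases ht₀.eq_or_lt with rfl | ht₀
    · have h0 : Tendsto (fun t : ℝ => lam * t ^ ((1 - γ / 2) / (1 - q))) (nhds 0) (nhds 0) := by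
        have := ((Real.continuous_rpow_const hb.le).tendsto (0 : ℝ)).const_mul lam
        simpa [Real.zero_rpow hb.ne'] using this
      obtain ⟨δ, hδ, h⟩ := Metric.tendsto_nhds_nhds.1 h0 ε hε
      refine ⟨δ, hδ, fun t ht htd x => ?_⟩
      have h1 := h (x := t) htd
      rw [hw0, sub_zero]
      rw [Real.dist_eq, sub_zero] at h1
      exact (hbound t ht x).trans ((le_abs_self _).trans h1.le)
    · obtain ⟨δ, hδ, h⟩ := exists_forall_abs_profile_sub_le (p := 1 / (1 - q)) ha.le ht₀
        (div_pos hε (by linarith : 0 < lam + 1))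
      refine ⟨min δ t₀, lt_min hδ ht₀, fun t ht htd x => ?_⟩
      have htpos : 0 < t := by
        have := (abs_lt.1 (htd.trans_le (min_le_right _ _))).1
        linarith
      have h1 := h t htpos (htd.trans_le (min_le_left _ _)) ‖x‖ (norm_nonneg x)
      rw [hw x t htpos, hw x t₀ ht₀, hneg, mul_assoc, mul_assoc, ← mul_sub, abs_mul,
        abs_of_nonneg hl]
      calc _ ≤ lam * (ε / (lam + 1)) := mul_le_mul_of_nonneg_left h1 hl
        _ ≤ ε := by
          rw [mul_div_assoc', div_le_iff₀ (by linarith)]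
          nlinarith
  · intro t ht x
    obtain ⟨C, hCint⟩ := exists_integral_gaussian_mul_norm_rpow_le hN hγ0 hγN
    set c : ℝ := (4 * π) ^ (-(N : ℝ) / 2) with hc
    have hcpos : 0 ≤ c := by positivity
    set M : ℝ := lam * t ^ ((1 - γ / 2) / (1 - q)) with hM
    have hMpos : 0 ≤ M := by positivity
    have hwM : ∀ σ, 0 ≤ σ → σ ≤ t → ∀ y, w y σ ^ q ≤ M ^ q := fun σ h0 h1 y =>
      Real.rpow_le_rpow (hwpos σ h0 y) (((le_abs_self _).trans (hbound σ h0 y)).trans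
        (mul_le_mul_of_nonneg_left (Real.rpow_le_rpow h0 h1 hb.le) hl)) hq0.le
    set F : ℝ → ℝ := fun σ => ∫ y, heatKernel N (t - σ) (x - y) * ‖y‖ ^ (-γ) * w y σ ^ q with hF
    have hFeq : ∀ σ, σ < t → F σ = c * ∫ z, Real.exp (-‖z‖ ^ 2 / 4) *
        (‖x - √(t - σ) • z‖ ^ (-γ) * w (x - √(t - σ) • z) σ ^ q) := by
      intro σ hσ
      rw [hF, ← integral_heatKernel_mul (sub_pos.2 hσ) x (fun y => ‖y‖ ^ (-γ) * w y σ ^ q)]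
      simp only [mul_assoc]
    have hint : ∀ σ, 0 < σ → σ < t → Integrable (fun z => Real.exp (-‖z‖ ^ 2 / 4) *
        (‖x - √(t - σ) • z‖ ^ (-γ) * w (x - √(t - σ) • z) σ ^ q)) := by
      intro σ h0 h1
      have hm : Measurable (fun y => w y σ) := (hcont σ h0.le).measurable
      refine ((hCint x (t - σ) (sub_pos.2 h1)).1.mul_const (M ^ q)).mono'
        (Measurable.aestronglyMeasurable (by fun_prop)) (Eventually.of_forall fun z => ?_)
      have hw1 := hwpos σ h0.le (x - √(t - σ) • z)
      rw [Real.norm_of_nonneg (by positivity), ← mul_assoc]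
      exact mul_le_mul_of_nonneg_left (hwM σ h0.le h1.le _) (by positivity)
    have hF0 : ∀ σ, 0 < σ → σ < t → 0 ≤ F σ := by
      intro σ h0 h1
      rw [hFeq σ h1]
      refine mul_nonneg hcpos (integral_nonneg fun z => ?_)
      have hw1 := hwpos σ h0.le (x - √(t - σ) • z)
      positivity
    have hupper : ∀ σ, 0 < σ → σ < t → F σ ≤ c * (C * M ^ q) * (t - σ) ^ (-(γ / 2)) := by
      intro σ h0 h1
      obtain ⟨hi, hle⟩ := hCint x (t - σ) (sub_pos.2 h1)
      rw [hFeq σ h1, mul_assoc]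
      refine mul_le_mul_of_nonneg_left ?_ hcpos
      calc _ ≤ ∫ z, Real.exp (-‖z‖ ^ 2 / 4) * ‖x - √(t - σ) • z‖ ^ (-γ) * M ^ q := by
            refine integral_mono (hint σ h0 h1) (hi.mul_const _) fun z => ?_
            simp only [← mul_assoc]
            exact mul_le_mul_of_nonneg_left (hwM σ h0.le h1.le _) (by positivity)
        _ ≤ C * (t - σ) ^ (-(γ / 2)) * M ^ q := by
            rw [integral_mul_const]
            exact mul_le_mul_of_nonneg_right hle (by positivity)
        _ = _ := by ring
    have hlower : ∀ σ, 0 < σ → σ < t → lam ^ q * η₀ * (‖x‖ + √t) ^ (-γ / (1 - q)) *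
        σ ^ (q / (1 - q)) ≤ F σ := by
      intro σ h0 h1
      have hs : √(t - σ) ≠ 0 := (Real.sqrt_pos.2 (sub_pos.2 h1)).ne'
      have hne : ∀ᵐ z : EuclideanSpace ℝ (Fin N), x - √(t - σ) • z ≠ 0 := by
        have : Nontrivial (EuclideanSpace ℝ (Fin N)) :=
          Module.nontrivial_of_finrank_pos (R := ℝ) (by rw [finrank_euclideanSpace_fin]; exact hN)
        filter_upwards [Measure.ae_ne volume ((√(t - σ))⁻¹ • x)] with z hz h
        refine hz ?_
        rw [sub_eq_zero.1 h, inv_smul_smul₀ hs]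
      rw [hFeq σ h1]
      have key : ∫ z : EuclideanSpace ℝ (Fin N),
          lam ^ q * σ ^ (q / (1 - q)) * (‖x‖ + √t) ^ (-γ / (1 - q)) *
            (Real.exp (-‖z‖ ^ 2 / 4) * (1 + ‖z‖) ^ (-γ / (1 - q))) ≤
          ∫ z, Real.exp (-‖z‖ ^ 2 / 4) *
            (‖x - √(t - σ) • z‖ ^ (-γ) * w (x - √(t - σ) • z) σ ^ q) := by
        refine integral_mono_of_nonneg (Eventually.of_forall fun z => ?_) (hint σ h0 h1) ?_
        · positivity
        · filter_upwards [hne] with z hz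
          have h := le_norm_rpow_mul_profile hq1 hγ0 hl h0 h1 hz
          rw [hw _ σ h0]
          refine le_of_eq_of_le ?_ (mul_le_mul_of_nonneg_left h (Real.exp_pos _).le)
          ring
      rw [integral_const_mul] at key
      refine le_of_eq_of_le ?_ (mul_le_mul_of_nonneg_left key hcpos)
      rw [hη₀]
      ring
    have hmeas : AEStronglyMeasurable F (volume.restrict (Set.Ioc 0 t)) := by
      have h1 : StronglyMeasurable (fun σ : ℝ => ∫ y : EuclideanSpace ℝ (Fin N),
          heatKernel N (t - σ) (x - y) * ‖y‖ ^ (-γ) *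
            (lam * σ ^ (1 / (1 - q)) * (‖y‖ + √σ) ^ (-γ / (1 - q))) ^ q) := by
        refine StronglyMeasurable.integral_prod_right (Measurable.stronglyMeasurable ?_)
        unfold Function.uncurry heatKernel
        fun_prop
      refine h1.aestronglyMeasurable.congr ?_
      filter_upwards [ae_restrict_mem measurableSet_Ioc] with σ hσ
      simp only [hF, hw _ σ hσ.1]
    have hdom : IntervalIntegrable (fun σ => c * (C * M ^ q) * (t - σ) ^ (-(γ / 2)))
        volume 0 t := by
      have h := (intervalIntegral.intervalIntegrable_rpow' (a := 0) (b := t)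
        (by linarith : -1 < -(γ / 2))).comp_sub_left t
      simp only [sub_zero, sub_self] at h
      exact h.symm.const_mul _
    have hFint : IntervalIntegrable F volume 0 t := by
      rw [intervalIntegrable_iff_integrableOn_Ioc_of_le ht.le] at hdom ⊢
      refine hdom.mono' hmeas ?_
      have hnt : ∀ᵐ σ ∂(volume.restrict (Set.Ioc 0 t)), σ ≠ t :=
        ae_restrict_of_ae (Measure.ae_ne volume t)
      filter_upwards [ae_restrict_mem measurableSet_Ioc, hnt] with σ hσ hσt
      have hlt := lt_of_le_of_ne hσ.2 hσt
      rw [Real.norm_of_nonneg (hF0 σ hσ.1 hlt)]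
      exact hupper σ hσ.1 hlt
    have hqq : 0 < q / (1 - q) := div_pos hq0 hq
    have hpow : IntervalIntegrable (fun σ : ℝ => lam ^ q * η₀ * (‖x‖ + √t) ^ (-γ / (1 - q)) *
        σ ^ (q / (1 - q))) volume 0 t :=
      (intervalIntegral.intervalIntegrable_rpow' (by linarith)).const_mul _
    refine le_of_eq_of_le ?_ (intervalIntegral.integral_mono_on_of_le_Ioo ht.le hpow hFint
      fun σ hσ => hlower σ hσ.1 hσ.2)
    have hsum : q / (1 - q) + 1 = 1 / (1 - q) := by
      field_simp
      ring
    have hlamq : lam ^ q * η₀ * (1 - q) = lam := by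
      have hB : 0 ≤ (1 - q) * η₀ := by positivity
      have h1 : (((1 - q) * η₀) ^ (1 / (1 - q))) ^ q * ((1 - q) * η₀) =
          ((1 - q) * η₀) ^ (1 / (1 - q)) := by
        rw [← Real.rpow_mul hB, ← Real.rpow_add_one' hB (by positivity)]
        congr 1
        rw [← hsum]
        field_simp
        ring
      rw [← hlam] at h1
      linarith
    rw [intervalIntegral.integral_const_mul, integral_rpow (Or.inl (by linarith)), hsum,
      Real.zero_rpow (by positivity), sub_zero, hw x t ht]
    nth_rewrite 1 [← hlamq]
    field_simp
end
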